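/- arXiv:2205.15978 — 8 statements merged into one kernel-verified Lean document; each statement's English description precedes it below -/
import Mathlib

section
/- Let s : (0,π) → ℝ be continuous with θ ↦ s(θ)/sin θ locally integrable, let C₁, C₂ ∈ ℝ, fix θ₀, θ₁ ∈ (0,π), and define r(θ) = C₂·cos θ + C₁ + ∫_{θ₀}^{θ} sin φ·(∫_{θ₁}^{φ} s(ψ)/sin ψ dψ) dφ. Then r is twice continuously differentiable on (0,π) and r''(θ) + r(θ) − (r'(θ)·cot θ + r(θ)) = s(θ) for all θ ∈ (0,π); that is, the surface with support function r has astigmatism s. -/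
open Real Set MeasureTheory intervalIntegral

/-! Away from the zeros of the sine, `r₂ - r₁ = r'' - r' cot θ = sin θ · (r' / sin θ)'`, so
prescribing the astigmatism `s` amounts to prescribing the derivative `s / sin` of `r' / sin`; two
quadratures recover `r`, the integration constants contributing the multiples of `1` and `cos`. -/

section Primitive

variable {E : Type*} [NormedAddCommGroup E] [NormedSpace ℝ E] [CompleteSpace E]
  {f : ℝ → E} {U : Set ℝ} [U.OrdConnected] {a : ℝ}

theorem hasDerivAt_integral_of_continuousOn (hU : IsOpen U) (hf : ContinuousOn f U)
    (ha : a ∈ U) {x : ℝ} (hx : x ∈ U) :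
    HasDerivAt (fun y => ∫ t in a..y, f t) (f x) x :=
  integral_hasDerivAt_right
    (hf.mono (OrdConnected.uIcc_subset ‹_› ha hx)).intervalIntegrable
    (hf.stronglyMeasurableAtFilter hU x hx) (hf.continuousAt (hU.mem_nhds hx))

theorem contDiffOn_succ_integral {n : ℕ∞} (hU : IsOpen U) (hf : ContDiffOn ℝ n f U)
    (ha : a ∈ U) : ContDiffOn ℝ (n + 1) (fun y => ∫ t in a..y, f t) U := by
  have hderiv : ∀ x ∈ U, HasDerivAt (fun y => ∫ t in a..y, f t) (f x) x :=
    fun _ hx => hasDerivAt_integral_of_continuousOn hU hf.continuousOn ha hx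
  rw [contDiffOn_succ_iff_deriv_of_isOpen hU]
  exact ⟨fun x hx => (hderiv x hx).differentiableAt.differentiableWithinAt, by simp,
    hf.congr fun x hx => (hderiv x hx).deriv⟩

end Primitive

/-- The astigmatism `r₂ - r₁` of the surface of revolution with support function `r`, where
`r₁ = r' cot θ + r` and `r₂ = r'' + r` are its radii of curvature. It is meaningful where
`sin θ ≠ 0` and `r` is twice differentiable; elsewhere Lean's conventions for division and `deriv`
apply. -/
noncomputable def astigmatism (r : ℝ → ℝ) (θ : ℝ) : ℝ :=
  (deriv (deriv r) θ + r θ) - (deriv r θ * (cos θ / sin θ) + r θ)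

theorem astigmatism_eq_sin_mul_of_deriv_eventuallyEq {r v : ℝ → ℝ} {v' θ : ℝ} (hθ : sin θ ≠ 0)
    (hr : deriv r =ᶠ[nhds θ] fun x => sin x * v x) (hv : HasDerivAt v v' θ) :
    astigmatism r θ = sin θ * v' := by
  have hr' : deriv (deriv r) θ = cos θ * v θ + sin θ * v' :=
    (((hasDerivAt_sin θ).mul hv).congr_of_eventuallyEq hr).deriv
  rw [astigmatism, hr', hr.eq_of_nhds]
  field_simp
  ring

/-- The support function obtained from a prescribed astigmatism `s` by two quadratures, based at
`θ₁` (inner) and `θ₀` (outer), with integration constants `C₁` and `C₂`. -/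
noncomputable def supportOfAstigmatism (s : ℝ → ℝ) (C₁ C₂ θ₀ θ₁ θ : ℝ) : ℝ :=
  C₂ * cos θ + C₁ + ∫ φ in θ₀..θ, sin φ * ∫ ψ in θ₁..φ, s ψ / sin ψ

section Quadrature

variable {s : ℝ → ℝ} {U : Set ℝ} [U.OrdConnected] {θ₀ θ₁ : ℝ}

theorem contDiffOn_supportOfAstigmatism {n : ℕ∞} (hU : IsOpen U) (hsin : ∀ θ ∈ U, sin θ ≠ 0)
    (hs : ContDiffOn ℝ n s U) (C₁ C₂ : ℝ) (hθ₀ : θ₀ ∈ U) (hθ₁ : θ₁ ∈ U) :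
    ContDiffOn ℝ (n + 2) (supportOfAstigmatism s C₁ C₂ θ₀ θ₁) U := by
  have hinner : ContDiffOn ℝ (n + 1) (fun φ => ∫ ψ in θ₁..φ, s ψ / sin ψ) U :=
    contDiffOn_succ_integral hU (hs.div contDiff_sin.contDiffOn hsin) hθ₁
  have houter : ContDiffOn ℝ (n + 2)
      (fun θ => ∫ φ in θ₀..θ, sin φ * ∫ ψ in θ₁..φ, s ψ / sin ψ) U := by
    simpa only [WithTop.coe_add, WithTop.coe_one, add_assoc, one_add_one_eq_two] using
      contDiffOn_succ_integral (n := n + 1) hU (contDiff_sin.contDiffOn.mul hinner) hθ₀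
  exact ((contDiff_const.mul contDiff_cos).add contDiff_const).contDiffOn.add houter

theorem hasDerivAt_supportOfAstigmatism (hU : IsOpen U) (hsin : ∀ θ ∈ U, sin θ ≠ 0)
    (hs : ContinuousOn s U) (C₁ C₂ : ℝ) (hθ₀ : θ₀ ∈ U) (hθ₁ : θ₁ ∈ U) {θ : ℝ} (hθ : θ ∈ U) :
    HasDerivAt (supportOfAstigmatism s C₁ C₂ θ₀ θ₁)
      (sin θ * ((∫ ψ in θ₁..θ, s ψ / sin ψ) - C₂)) θ := by
  have hinner : ContinuousOn (fun φ => ∫ ψ in θ₁..φ, s ψ / sin ψ) U := fun φ hφ =>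
    (hasDerivAt_integral_of_continuousOn hU (hs.div continuousOn_sin hsin) hθ₁
      hφ).continuousAt.continuousWithinAt
  have houter := hasDerivAt_integral_of_continuousOn hU (continuousOn_sin.mul hinner) hθ₀ hθ
  refine ((((hasDerivAt_cos θ).const_mul C₂).add_const C₁).add houter).congr_deriv ?_
  rw [Pi.mul_apply]
  ring

theorem astigmatism_supportOfAstigmatism (hU : IsOpen U) (hsin : ∀ θ ∈ U, sin θ ≠ 0)
    (hs : ContinuousOn s U) (C₁ C₂ : ℝ) (hθ₀ : θ₀ ∈ U) (hθ₁ : θ₁ ∈ U) {θ : ℝ} (hθ : θ ∈ U) :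
    astigmatism (supportOfAstigmatism s C₁ C₂ θ₀ θ₁) θ = s θ := by
  have hderiv : deriv (supportOfAstigmatism s C₁ C₂ θ₀ θ₁) =ᶠ[nhds θ]
      fun x => sin x * ((∫ ψ in θ₁..x, s ψ / sin ψ) - C₂) := by
    filter_upwards [hU.mem_nhds hθ] with x hx
    exact (hasDerivAt_supportOfAstigmatism hU hsin hs C₁ C₂ hθ₀ hθ₁ hx).deriv
  have hinner : HasDerivAt (fun x => (∫ ψ in θ₁..x, s ψ / sin ψ) - C₂) (s θ / sin θ) θ :=
    (hasDerivAt_integral_of_continuousOn hU (hs.div continuousOn_sin hsin) hθ₁ hθ).sub_const C₂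
  rw [astigmatism_eq_sin_mul_of_deriv_eventuallyEq (hsin θ hθ) hderiv hinner,
    mul_div_cancel₀ _ (hsin θ hθ)]

theorem support_function_from_quadrature_general {n : ℕ∞} (hU : IsOpen U)
    (hsin : ∀ θ ∈ U, sin θ ≠ 0) (hs : ContDiffOn ℝ n s U) (C₁ C₂ : ℝ) (hθ₀ : θ₀ ∈ U)
    (hθ₁ : θ₁ ∈ U) :
    ContDiffOn ℝ (n + 2) (supportOfAstigmatism s C₁ C₂ θ₀ θ₁) U ∧
      ∀ θ ∈ U, astigmatism (supportOfAstigmatism s C₁ C₂ θ₀ θ₁) θ = s θ :=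
  ⟨contDiffOn_supportOfAstigmatism hU hsin hs C₁ C₂ hθ₀ hθ₁,
    fun _ hθ => astigmatism_supportOfAstigmatism hU hsin hs.continuousOn C₁ C₂ hθ₀ hθ₁ hθ⟩

end Quadrature

/-- If `r(θ) = C₂·cos θ + C₁ + ∫_{θ₀}^{θ} sin φ·(∫_{θ₁}^{φ} s(ψ)/sin ψ dψ) dφ`
then `r` is `C²` on `(0,π)` and the surface with support function `r` has
astigmatism `s`, i.e. `r₂ − r₁ = s` where `r₁ = r'·cot θ + r`, `r₂ = r'' + r`. -/
theorem support_function_from_quadrature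
    (s : ℝ → ℝ) (hs : ContinuousOn s (Set.Ioo 0 π))
    (hloc : LocallyIntegrableOn (fun θ => s θ / Real.sin θ) (Set.Ioo 0 π))
    (C₁ C₂ θ₀ θ₁ : ℝ) (hθ₀ : θ₀ ∈ Set.Ioo 0 π) (hθ₁ : θ₁ ∈ Set.Ioo 0 π)
    (r : ℝ → ℝ)
    (hr : ∀ θ, r θ = C₂ * Real.cos θ + C₁ +
        ∫ φ in θ₀..θ, Real.sin φ * ∫ ψ in θ₁..φ, s ψ / Real.sin ψ) :
    ContDiffOn ℝ 2 r (Set.Ioo 0 π) ∧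
      ∀ θ ∈ Set.Ioo 0 π,
        (deriv (deriv r) θ + r θ) - (deriv r θ * (Real.cos θ / Real.sin θ) + r θ) = s θ := by
  obtain rfl : r = supportOfAstigmatism s C₁ C₂ θ₀ θ₁ := funext hr
  simpa only [astigmatism, WithTop.coe_zero, zero_add] using
    support_function_from_quadrature_general (n := 0) isOpen_Ioo
      (fun _ hθ => (sin_pos_of_mem_Ioo hθ).ne') (contDiffOn_zero.mpr hs) C₁ C₂ hθ₀ hθ₁
end

section
/- Let δ ∈ (0,π/2), let r₁, r₂ : (0,δ] → ℝ be continuously differentiable with s := r₂ − r₁ nowhere zero on (0,δ], and suppose the derived Codazzi–Mainardi equation r₁'(θ) = s(θ)·cot θ holds on (0,δ]. Then for every α ∈ ℝ and every θ ∈ (0,δ]: |s(θ)/sin^α θ| = |s(δ)/sin^α δ| · exp(∫_θ^δ cot φ · (α + 1 − r₂'(φ)/r₁'(φ)) dφ). -/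
open Real Set

/-!
By the Codazzi–Mainardi equation the astigmatism `s = r₂ - r₁` solves the linear equation
`s' = (r₂'/s - cot) s`, while `sin' = cot · sin`. So `s / sin ^ α` solves the linear equation with
coefficient `r₂'/s - (α + 1) cot = -cot · (α + 1 - r₂'/(s cot))`, in which `s cot = r₁'`, and
integrating its logarithmic derivative gives the formula.
-/

open MeasureTheory

theorem abs_eq_abs_mul_exp_integral_of_hasDerivAt_mul {f u : ℝ → ℝ} {a b : ℝ}
    (hcont : ContinuousOn f (uIcc a b)) (hne : ∀ x ∈ uIcc a b, f x ≠ 0)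
    (hderiv : ∀ x ∈ uIoo a b, HasDerivAt f (u x * f x) x)
    (hu : IntervalIntegrable u volume a b) :
    |f b| = |f a| * exp (∫ x in a..b, u x) := by
  have hlog : ∀ x ∈ uIoo a b, HasDerivAt (fun y => log (f y)) (u x) x := fun x hx => by
    have hx₀ := hne x (Ioo_subset_Icc_self hx)
    simpa only [mul_div_cancel_right₀ _ hx₀] using (hderiv x hx).log hx₀
  have hint : ∫ x in a..b, u x = log (f b) - log (f a) :=
    intervalIntegral.integral_eq_sub_of_hasDeriv_right (hcont.log hne)
      (fun x hx => (hlog x hx).hasDerivWithinAt) hu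
  rw [hint, exp_sub, exp_log_eq_abs (hne a left_mem_uIcc), exp_log_eq_abs (hne b right_mem_uIcc),
    mul_div_cancel₀ _ (abs_ne_zero.2 (hne a left_mem_uIcc))]

theorem hasDerivAt_div_rpow_of_hasDerivAt_mul {f g : ℝ → ℝ} {u v x : ℝ} (α : ℝ)
    (hf : HasDerivAt f (u * f x) x) (hg : HasDerivAt g (v * g x) x) (hgx : 0 < g x) :
    HasDerivAt (fun y => f y / g y ^ α) ((u - α * v) * (f x / g x ^ α)) x := by
  have hpow : HasDerivAt (fun y => g y ^ α) (α * v * g x ^ α) x := by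
    refine (hg.rpow_const (.inl hgx.ne')).congr_deriv ?_
    rw [rpow_sub_one hgx.ne']
    field_simp
  have hpos : g x ^ α ≠ 0 := (rpow_pos_of_pos hgx α).ne'
  refine (hf.div hpow hpos).congr_deriv ?_
  field_simp

section CodazziMainardi

variable {r₁ r₂ : ℝ → ℝ}

theorem hasDerivAt_astigmatism {r₂' c θ : ℝ} (h₁ : HasDerivAt r₁ ((r₂ θ - r₁ θ) * c) θ)
    (h₂ : HasDerivAt r₂ r₂' θ) (hs : r₂ θ - r₁ θ ≠ 0) :
    HasDerivAt (fun φ => r₂ φ - r₁ φ) ((r₂' / (r₂ θ - r₁ θ) - c) * (r₂ θ - r₁ θ)) θ := by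
  refine (h₂.sub h₁).congr_deriv ?_
  field_simp

theorem hasDerivAt_astigmatism_div_sin_rpow {r₂' θ : ℝ} (α : ℝ)
    (h₁ : HasDerivAt r₁ ((r₂ θ - r₁ θ) * (cos θ / sin θ)) θ) (h₂ : HasDerivAt r₂ r₂' θ)
    (hs : r₂ θ - r₁ θ ≠ 0) (hsin : 0 < sin θ) :
    HasDerivAt (fun φ => (r₂ φ - r₁ φ) / sin φ ^ α)
      ((r₂' / (r₂ θ - r₁ θ) - (α + 1) * (cos θ / sin θ)) * ((r₂ θ - r₁ θ) / sin θ ^ α)) θ := by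
  have hsin' : HasDerivAt sin (cos θ / sin θ * sin θ) θ := by
    simpa only [div_mul_cancel₀ _ hsin.ne'] using hasDerivAt_sin θ
  refine (hasDerivAt_div_rpow_of_hasDerivAt_mul α
    (hasDerivAt_astigmatism h₁ h₂ hs) hsin' hsin).congr_deriv ?_
  ring

theorem integral_cot_mul_of_codazziMainardi {r₁' r₂' : ℝ → ℝ} {a b : ℝ}
    (ha : a ∈ Ioo 0 π) (hb : b ∈ Ioo 0 π)
    (hCM : ∀ θ ∈ uIoo a b, r₁' θ = (r₂ θ - r₁ θ) * (cos θ / sin θ)) (α : ℝ) :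
    ∫ θ in a..b, cos θ / sin θ * (α + 1 - r₂' θ / r₁' θ) =
      -∫ θ in a..b, (r₂' θ / (r₂ θ - r₁ θ) - (α + 1) * (cos θ / sin θ)) := by
  rw [← intervalIntegral.integral_neg]
  -- At `θ = π / 2` the quotient `r₂' / r₁'` is a division by zero, but a single point is null.
  refine intervalIntegral.integral_congr_ae ?_
  filter_upwards [Measure.ae_ne volume (a ⊔ b), Measure.ae_ne volume (π / 2)] with θ hmax hθ₂ hθ
  have hθab : θ ∈ uIoo a b := ⟨hθ.1, hθ.2.lt_of_ne hmax⟩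
  have hθπ : θ ∈ Ioo 0 π := ordConnected_Ioo.uIcc_subset ha hb (Ioo_subset_Icc_self hθab)
  have hcos : cos θ ≠ 0 := cos_pi_div_two ▸
    injOn_cos.ne (Ioo_subset_Icc_self hθπ) ⟨by positivity, half_le_self pi_pos.le⟩ hθ₂
  have hcot : cos θ / sin θ ≠ 0 := div_ne_zero hcos (sin_pos_of_mem_Ioo hθπ).ne'
  have hquot : cos θ / sin θ * (r₂' θ / r₁' θ) = r₂' θ / (r₂ θ - r₁ θ) := by
    rw [hCM θ hθab, ← mul_div_assoc, mul_comm (r₂ θ - r₁ θ), mul_div_mul_left _ _ hcot]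
  rw [mul_sub, hquot]
  ring

theorem intervalIntegrable_div_astigmatism_sub_cot {r₂' : ℝ → ℝ} {a b : ℝ} (c : ℝ)
    (hsin : ∀ θ ∈ uIcc a b, sin θ ≠ 0)
    (hc₁ : ContinuousOn r₁ (uIcc a b)) (hc₂ : ContinuousOn r₂ (uIcc a b))
    (hs : ∀ θ ∈ uIcc a b, r₂ θ - r₁ θ ≠ 0) (hr₂' : IntervalIntegrable r₂' volume a b) :
    IntervalIntegrable (fun θ => r₂' θ / (r₂ θ - r₁ θ) - c * (cos θ / sin θ)) volume a b := by
  have hinv : ContinuousOn (fun θ => (r₂ θ - r₁ θ)⁻¹) (uIcc a b) := (hc₂.sub hc₁).inv₀ hs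
  have hquot : IntervalIntegrable (fun θ => r₂' θ / (r₂ θ - r₁ θ)) volume a b := by
    simpa only [div_eq_mul_inv] using hr₂'.mul_continuousOn hinv
  have hcot : ContinuousOn (fun θ => cos θ / sin θ) (uIcc a b) :=
    continuousOn_cos.div continuousOn_sin hsin
  exact hquot.sub (hcot.intervalIntegrable.const_mul c)

theorem astigmatism_integral_formula_general {r₁' r₂' : ℝ → ℝ} {a b : ℝ}
    (ha : a ∈ Ioo 0 π) (hb : b ∈ Ioo 0 π)
    (hc₁ : ContinuousOn r₁ (uIcc a b)) (hc₂ : ContinuousOn r₂ (uIcc a b))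
    (hd₁ : ∀ θ ∈ uIoo a b, HasDerivAt r₁ (r₁' θ) θ)
    (hd₂ : ∀ θ ∈ uIoo a b, HasDerivAt r₂ (r₂' θ) θ)
    (hr₂' : IntervalIntegrable r₂' volume a b)
    (hsne : ∀ θ ∈ uIcc a b, r₂ θ - r₁ θ ≠ 0)
    (hCM : ∀ θ ∈ uIoo a b, r₁' θ = (r₂ θ - r₁ θ) * (cos θ / sin θ)) (α : ℝ) :
    |(r₂ a - r₁ a) / sin a ^ α| =
      |(r₂ b - r₁ b) / sin b ^ α| *
        exp (∫ φ in a..b, cos φ / sin φ * (α + 1 - r₂' φ / r₁' φ)) := by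
  have hsin : ∀ θ ∈ uIcc a b, 0 < sin θ := fun θ hθ =>
    sin_pos_of_mem_Ioo (ordConnected_Ioo.uIcc_subset ha hb hθ)
  have hsin₀ : ∀ θ ∈ uIcc a b, sin θ ≠ 0 := fun θ hθ => (hsin θ hθ).ne'
  have hpow : ∀ θ ∈ uIcc a b, sin θ ^ α ≠ 0 := fun θ hθ => (rpow_pos_of_pos (hsin θ hθ) α).ne'
  have hcont : ContinuousOn (fun θ => (r₂ θ - r₁ θ) / sin θ ^ α) (uIcc a b) :=
    (hc₂.sub hc₁).div (continuousOn_sin.rpow_const fun θ hθ => .inl (hsin₀ θ hθ)) hpow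
  have hsol := abs_eq_abs_mul_exp_integral_of_hasDerivAt_mul hcont
    (fun θ hθ => div_ne_zero (hsne θ hθ) (hpow θ hθ))
    (fun θ hθ => hasDerivAt_astigmatism_div_sin_rpow α (hCM θ hθ ▸ hd₁ θ hθ) (hd₂ θ hθ)
      (hsne θ (Ioo_subset_Icc_self hθ)) (hsin θ (Ioo_subset_Icc_self hθ)))
    (intervalIntegrable_div_astigmatism_sub_cot (α + 1) hsin₀ hc₁ hc₂ hsne hr₂')
  rw [hsol, integral_cot_mul_of_codazziMainardi ha hb hCM α, mul_assoc, ← exp_add,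
    add_neg_cancel, exp_zero, mul_one]

end CodazziMainardi

/-- Integral formula for the astigmatism: under the derived Codazzi–Mainardi equation,
for every `α` and every `θ ∈ (0,δ]`,
`|s(θ)/sin^α θ| = |s(δ)/sin^α δ|·exp(∫_θ^δ cot φ·(α+1 − r₂'/r₁') dφ)`. -/
theorem astigmatism_integral_formula
    (δ : ℝ) (hδ : δ ∈ Set.Ioo 0 (π/2))
    (r₁ r₂ r₁' r₂' : ℝ → ℝ)
    (hd₁ : ∀ θ ∈ Set.Ioc 0 δ, HasDerivAt r₁ (r₁' θ) θ)
    (hd₂ : ∀ θ ∈ Set.Ioc 0 δ, HasDerivAt r₂ (r₂' θ) θ)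
    (hc₁ : ContinuousOn r₁' (Set.Ioc 0 δ))
    (hc₂ : ContinuousOn r₂' (Set.Ioc 0 δ))
    (hsne : ∀ θ ∈ Set.Ioc 0 δ, r₂ θ - r₁ θ ≠ 0)
    (hCM : ∀ θ ∈ Set.Ioc 0 δ, r₁' θ = (r₂ θ - r₁ θ) * (Real.cos θ / Real.sin θ)) :
    ∀ (α : ℝ), ∀ θ ∈ Set.Ioc 0 δ,
      |(r₂ θ - r₁ θ) / Real.sin θ ^ α| =
        |(r₂ δ - r₁ δ) / Real.sin δ ^ α| *
          Real.exp (∫ φ in θ..δ, (Real.cos φ / Real.sin φ) * (α + 1 - r₂' φ / r₁' φ)) := by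
  intro α θ hθ
  have hsub : uIcc θ δ ⊆ Ioc 0 δ := ordConnected_Ioc.uIcc_subset hθ ⟨hδ.1, le_rfl⟩
  have hsub' : uIoo θ δ ⊆ Ioc 0 δ := Ioo_subset_Icc_self.trans hsub
  have hδπ : δ < π := hδ.2.trans (half_lt_self pi_pos)
  exact astigmatism_integral_formula_general ⟨hθ.1, hθ.2.trans_lt hδπ⟩ ⟨hδ.1, hδπ⟩
    (HasDerivAt.continuousOn fun φ hφ => hd₁ φ (hsub hφ))
    (HasDerivAt.continuousOn fun φ hφ => hd₂ φ (hsub hφ))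
    (fun φ hφ => hd₁ φ (hsub' hφ)) (fun φ hφ => hd₂ φ (hsub' hφ))
    (hc₂.mono hsub).intervalIntegrable (fun φ hφ => hsne φ (hsub hφ))
    (fun φ hφ => hCM φ (hsub' hφ)) α
end

section
/- Let δ ∈ (0,π/2), let r₁, r₂ : (0,δ] → ℝ be continuously differentiable with s := r₂ − r₁ nowhere zero on (0,δ], suppose the derived Codazzi–Mainardi equation r₁'(θ) = s(θ)·cot θ holds on (0,δ], and suppose the umbilic slope μ₀ = lim_{θ→0} r₂'(θ)/r₁'(θ) exists. If μ₀ > α + 1 for some α ∈ ℝ, then lim_{θ→0} s(θ)/sin^α θ = 0. -/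
open Real Set Filter Topology

/-!
If `s` grows at least at the logarithmic rate of `φ ^ β`, that is `β φ' / φ ≤ s' / s`, then
`|s| / φ ^ β` is nondecreasing, so `s = O(φ ^ β)` at the left end of the interval, and
`s = o(φ ^ α)` for `α < β` when `φ → 0`. The Codazzi–Mainardi equation reads
`s' / s = (r₂' / r₁' - 1) · sin' / sin`, so the umbilic slope minus one bounds the exponent for
`φ = sin`.
-/

open Asymptotics

section GrowthComparison

variable {E : Type*} [NormedAddCommGroup E] [InnerProductSpace ℝ E]

theorem monotoneOn_norm_of_inner_deriv_nonneg {D : Set ℝ} (hD : Convex ℝ D) {f f' : ℝ → E}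
    (hf : ContinuousOn f D)
    (hf' : ∀ x ∈ interior D, HasDerivWithinAt f (f' x) (interior D) x)
    (hf'₀ : ∀ x ∈ interior D, 0 ≤ inner ℝ (f x) (f' x)) :
    MonotoneOn (‖f ·‖) D := by
  have hsq : MonotoneOn (‖f ·‖ ^ 2) D :=
    monotoneOn_of_hasDerivWithinAt_nonneg hD (hf.norm.pow 2) (fun x hx ↦ (hf' x hx).norm_sq)
      fun x hx ↦ mul_nonneg zero_le_two (hf'₀ x hx)
  exact fun x hx y hy hxy ↦ le_of_sq_le_sq (hsq hx hy hxy) (norm_nonneg _)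

theorem monotoneOn_norm_rpow_neg_smul {D : Set ℝ} (hD : Convex ℝ D) {s s' : ℝ → E}
    {φ φ' : ℝ → ℝ} {β : ℝ}
    (hs : ∀ x ∈ D, HasDerivWithinAt s (s' x) D x) (hφ : ∀ x ∈ D, HasDerivWithinAt φ (φ' x) D x)
    (hφ₀ : ∀ x ∈ D, 0 < φ x)
    (hgrowth : ∀ x ∈ interior D, β * φ' x * ‖s x‖ ^ 2 ≤ φ x * inner ℝ (s x) (s' x)) :
    MonotoneOn (fun x ↦ ‖φ x ^ (-β) • s x‖) D := by
  have hderiv : ∀ x ∈ D, HasDerivWithinAt (fun x ↦ φ x ^ (-β) • s x)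
      (φ x ^ (-β) • s' x + (φ' x * (-β) * φ x ^ (-β - 1)) • s x) D x := fun x hx ↦
    ((hφ x hx).rpow_const (.inl (hφ₀ x hx).ne')).smul (hs x hx)
  refine monotoneOn_norm_of_inner_deriv_nonneg hD (fun x hx ↦ (hderiv x hx).continuousWithinAt)
    (fun x hx ↦ (hderiv x (interior_subset hx)).mono interior_subset) fun x hx ↦ ?_
  have hpos := hφ₀ x (interior_subset hx)
  calc
    0 ≤ (φ x ^ (-β)) ^ 2 / φ x * (φ x * inner ℝ (s x) (s' x) - β * φ' x * ‖s x‖ ^ 2) :=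
      mul_nonneg (by positivity) (sub_nonneg.2 (hgrowth x hx))
    _ = inner ℝ (φ x ^ (-β) • s x)
        (φ x ^ (-β) • s' x + (φ' x * (-β) * φ x ^ (-β - 1)) • s x) := by
      rw [rpow_sub_one hpos.ne', inner_add_right]
      simp only [real_inner_smul_left, real_inner_smul_right, real_inner_self_eq_norm_sq]
      field_simp
      ring

theorem isBigO_rpow_nhdsGT_of_growth_le {s s' : ℝ → E} {φ φ' : ℝ → ℝ} {a β : ℝ}
    (hs : ∀ᶠ x in 𝓝[>] a, HasDerivAt s (s' x) x) (hφ : ∀ᶠ x in 𝓝[>] a, HasDerivAt φ (φ' x) x)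
    (hφ₀ : ∀ᶠ x in 𝓝[>] a, 0 < φ x)
    (hgrowth : ∀ᶠ x in 𝓝[>] a, β * φ' x * ‖s x‖ ^ 2 ≤ φ x * inner ℝ (s x) (s' x)) :
    s =O[𝓝[>] a] fun x ↦ φ x ^ β := by
  obtain ⟨b, hab, hb⟩ := mem_nhdsGT_iff_exists_Ioc_subset.1 (hs.and (hφ.and (hφ₀.and hgrowth)))
  have hmono : MonotoneOn (fun x ↦ ‖φ x ^ (-β) • s x‖) (Ioc a b) :=
    monotoneOn_norm_rpow_neg_smul (convex_Ioc a b)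
      (fun x hx ↦ (hb hx).1.hasDerivWithinAt) (fun x hx ↦ (hb hx).2.1.hasDerivWithinAt)
      (fun x hx ↦ (hb hx).2.2.1) fun x hx ↦ (hb (interior_subset hx)).2.2.2
  refine .of_bound ‖φ b ^ (-β) • s b‖ ?_
  filter_upwards [Ioc_mem_nhdsGT hab] with x hx
  have hpos : 0 < φ x := (hb hx).2.2.1
  calc
    ‖s x‖ = ‖φ x ^ (-β) • s x‖ * ‖φ x ^ β‖ := by
      rw [norm_smul, mul_right_comm, ← norm_mul, ← rpow_add hpos, neg_add_cancel, rpow_zero,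
        norm_one, one_mul]
    _ ≤ ‖φ b ^ (-β) • s b‖ * ‖φ x ^ β‖ := by
      gcongr
      exact hmono hx (right_mem_Ioc.2 hab) hx.2

end GrowthComparison

theorem isLittleO_rpow_rpow_nhdsGT_zero {α β : ℝ} (hαβ : α < β) :
    (fun x : ℝ ↦ x ^ β) =o[𝓝[>] 0] fun x ↦ x ^ α := by
  have hpos : ∀ᶠ x : ℝ in 𝓝[>] 0, 0 < x := self_mem_nhdsWithin
  refine (isLittleO_iff_tendsto' <| hpos.mono fun x hx h ↦ ((rpow_pos_of_pos hx α).ne' h).elim).2 ?_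
  have hlim : Tendsto (fun x : ℝ ↦ x ^ (β - α)) (𝓝[>] 0) (𝓝 0) :=
    (tendsto_nhdsWithin_of_tendsto_nhds tendsto_id).rpow_const_nhds_zero (sub_pos.2 hαβ)
  exact hlim.congr' <| hpos.mono fun x hx ↦ rpow_sub hx β α

theorem tendsto_sin_nhdsGT_zero : Tendsto sin (𝓝[>] 0) (𝓝[>] 0) := by
  refine tendsto_nhdsWithin_iff.2 ⟨?_, ?_⟩
  · exact tendsto_nhdsWithin_of_tendsto_nhds (continuous_sin.tendsto' 0 0 sin_zero)
  · filter_upwards [Ioo_mem_nhdsGT pi_pos] with θ hθ using sin_pos_of_mem_Ioo hθ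

/-- `c` and `d` stand for `cos θ` and `sin θ`. -/
theorem growth_le_of_codazzi {s r₁' r₂' c d β : ℝ} (hs : s ≠ 0) (hc : 0 < c) (hd : 0 < d)
    (hCM : r₁' = s * (c / d)) (hβ : β ≤ r₂' / r₁') :
    (β - 1) * c * s ^ 2 ≤ d * (s * (r₂' - r₁')) := by
  have hr₁' : r₁' ≠ 0 := hCM ▸ mul_ne_zero hs (div_pos hc hd).ne'
  have hcd : d * (s * r₁') = c * s ^ 2 := by
    rw [hCM]
    field_simp
  calc
    (β - 1) * c * s ^ 2 = (β - 1) * (c * s ^ 2) := mul_assoc ..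
    _ ≤ (r₂' / r₁' - 1) * (c * s ^ 2) := by gcongr
    _ = d * (s * (r₂' - r₁')) := by
      rw [← hcd]
      field_simp

theorem slope_gt_implies_vanishing_general {r₁ r₂ r₁' r₂' : ℝ → ℝ} {α β : ℝ}
    (hd₁ : ∀ᶠ θ in 𝓝[>] 0, HasDerivAt r₁ (r₁' θ) θ)
    (hd₂ : ∀ᶠ θ in 𝓝[>] 0, HasDerivAt r₂ (r₂' θ) θ)
    (hsne : ∀ᶠ θ in 𝓝[>] 0, r₂ θ - r₁ θ ≠ 0)
    (hCM : ∀ᶠ θ in 𝓝[>] 0, r₁' θ = (r₂ θ - r₁ θ) * (cos θ / sin θ))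
    (hβ : ∀ᶠ θ in 𝓝[>] 0, β ≤ r₂' θ / r₁' θ) (hαβ : α + 1 < β) :
    Tendsto (fun θ ↦ (r₂ θ - r₁ θ) / sin θ ^ α) (𝓝[>] 0) (𝓝 0) := by
  have hsin : ∀ᶠ θ in 𝓝[>] 0, 0 < sin θ :=
    tendsto_sin_nhdsGT_zero.eventually self_mem_nhdsWithin
  have hcos : ∀ᶠ θ in 𝓝[>] 0, 0 < cos θ :=
    (continuous_cos.continuousWithinAt (x := 0)).eventually_const_lt (cos_zero ▸ one_pos)
  have hO : (fun θ ↦ r₂ θ - r₁ θ) =O[𝓝[>] 0] fun θ ↦ sin θ ^ (β - 1) := by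
    refine isBigO_rpow_nhdsGT_of_growth_le (s' := fun θ ↦ r₂' θ - r₁' θ)
      (hd₂.and hd₁ |>.mono fun θ h ↦ h.1.sub h.2) (.of_forall hasDerivAt_sin) hsin ?_
    filter_upwards [hsne, hcos, hsin, hCM, hβ] with θ hs hc hd hCM hβ
    simpa only [norm_eq_abs, sq_abs, Real.inner_apply] using growth_le_of_codazzi hs hc hd hCM hβ
  have ho := (isLittleO_rpow_rpow_nhdsGT_zero (lt_sub_iff_add_lt.2 hαβ)).comp_tendsto
    tendsto_sin_nhdsGT_zero
  exact (hO.trans_isLittleO ho).tendsto_div_nhds_zero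

/-- If the umbilic slope `μ₀ = lim_{θ→0} r₂'/r₁'` exists and `μ₀ > α + 1`,
then `s/sin^α θ → 0` as `θ → 0`. -/
theorem slope_gt_implies_vanishing
    (δ : ℝ) (hδ : δ ∈ Set.Ioo 0 (π/2))
    (r₁ r₂ r₁' r₂' : ℝ → ℝ)
    (hd₁ : ∀ θ ∈ Set.Ioc 0 δ, HasDerivAt r₁ (r₁' θ) θ)
    (hd₂ : ∀ θ ∈ Set.Ioc 0 δ, HasDerivAt r₂ (r₂' θ) θ)
    (hc₁ : ContinuousOn r₁' (Set.Ioc 0 δ))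
    (hc₂ : ContinuousOn r₂' (Set.Ioc 0 δ))
    (hsne : ∀ θ ∈ Set.Ioc 0 δ, r₂ θ - r₁ θ ≠ 0)
    (hCM : ∀ θ ∈ Set.Ioc 0 δ, r₁' θ = (r₂ θ - r₁ θ) * (Real.cos θ / Real.sin θ))
    (μ₀ : ℝ)
    (hμ : Tendsto (fun θ => r₂' θ / r₁' θ) (𝓝[>] (0:ℝ)) (𝓝 μ₀))
    (α : ℝ) (hα : μ₀ > α + 1) :
    Tendsto (fun θ => (r₂ θ - r₁ θ) / Real.sin θ ^ α) (𝓝[>] (0:ℝ)) (𝓝 0) := by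
  obtain ⟨β, hαβ, hβμ⟩ := exists_between hα
  have near_pole {p : ℝ → Prop} : (∀ θ ∈ Ioc 0 δ, p θ) → ∀ᶠ θ in 𝓝[>] 0, p θ :=
    eventually_of_mem (Ioc_mem_nhdsGT hδ.1)
  exact slope_gt_implies_vanishing_general (near_pole hd₁) (near_pole hd₂) (near_pole hsne)
    (near_pole hCM) (hμ.eventually_const_le hβμ) hαβ
end

section
/- Let δ ∈ (0,π/2), let r₁, r₂ : [0,δ] → ℝ be infinitely differentiable with s := r₂ − r₁ satisfying s(0) = 0 and s^{(2m+1)}(0) = 0 for every m ∈ ℕ (as holds for a smooth strictly convex rotationally symmetric sphere), with s nowhere zero on (0,δ], and suppose the derived Codazzi–Mainardi equation r₁'(θ) = s(θ)·cot θ holds on (0,δ]. If the umbilic slope μ = lim_{θ→0} r₂'(θ)/r₁'(θ) exists and is finite, then μ is an odd integer ≥ 3; moreover, writing μ = 2k+1 with k ≥ 1, the limit lim_{θ→0} s(θ)/sin^{2k} θ = s^{(2k)}(0)/(2k)! exists and is finite and nonzero. -/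
open Real Set Filter Topology

/-!
By the Codazzi–Mainardi equation, `r₂' / r₁' - 1 = s' / r₁' = tan θ * s' / s`, so the existence of
the umbilic slope `μ` says that the logarithmic derivative of `s` satisfies
`θ * s' / s → μ - 1` at the pole. If `s` vanishes to finite order `n` there, Taylor's theorem for
`s` and `s'` identifies this limit as `n`. Infinite order is excluded: once
`θ * s' / s ≤ M`, the function `(s / θ ^ M) ^ 2` decreases away from the pole, so `s / θ ^ M` cannot
tend to `0`. Hence `μ = n + 1`, and the vanishing of the odd derivatives makes `n` even.
-/

open scoped ContDiff Nat

theorem tendsto_inv_pow_smul_of_iteratedDerivWithin_eq_zero {E : Type*} [NormedAddCommGroup E]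
    [NormedSpace ℝ E] {f : ℝ → E} {s : Set ℝ} {x₀ : ℝ} {n : ℕ} (hs : Convex ℝ s) (hx₀ : x₀ ∈ s)
    (hf : ContDiffOn ℝ n f s) (hzero : ∀ i < n, iteratedDerivWithin i f s x₀ = 0) :
    Tendsto (fun x ↦ ((x - x₀) ^ n)⁻¹ • f x) (𝓝[s \ {x₀}] x₀)
      (𝓝 ((n ! : ℝ)⁻¹ • iteratedDerivWithin n f s x₀)) := by
  have hTaylor (x : ℝ) : taylorWithinEval f n s x₀ x =
      (x - x₀) ^ n • (n ! : ℝ)⁻¹ • iteratedDerivWithin n f s x₀ := by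
    rw [taylor_within_apply, Finset.sum_range_succ, Finset.sum_eq_zero, zero_add, smul_smul,
      mul_comm]
    intro i hi
    rw [hzero i (Finset.mem_range.1 hi), smul_zero]
  have hrem := ((taylor_tendsto hs hx₀ hf).mono_left
    (nhdsWithin_mono x₀ (sdiff_subset (t := {x₀})))).add_const
    ((n ! : ℝ)⁻¹ • iteratedDerivWithin n f s x₀)
  rw [zero_add] at hrem
  refine hrem.congr' ?_
  filter_upwards [self_mem_nhdsWithin] with x hx
  have hpow : (x - x₀) ^ n ≠ 0 := pow_ne_zero n (sub_ne_zero.2 hx.2)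
  rw [hTaylor, smul_sub, inv_smul_smul₀ hpow, sub_add_cancel]

theorem tendsto_div_pow_of_iteratedDerivWithin_eq_zero {f : ℝ → ℝ} {s : Set ℝ} {x₀ : ℝ} {n : ℕ}
    (hs : Convex ℝ s) (hx₀ : x₀ ∈ s) (hf : ContDiffOn ℝ n f s)
    (hzero : ∀ i < n, iteratedDerivWithin i f s x₀ = 0) :
    Tendsto (fun x ↦ f x / (x - x₀) ^ n) (𝓝[s \ {x₀}] x₀)
      (𝓝 (iteratedDerivWithin n f s x₀ / n !)) := by
  simpa only [smul_eq_mul, ← div_eq_inv_mul] using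
    tendsto_inv_pow_smul_of_iteratedDerivWithin_eq_zero hs hx₀ hf hzero

theorem tendsto_mul_derivWithin_div_pow_of_iteratedDerivWithin_eq_zero {f : ℝ → ℝ} {s : Set ℝ}
    {x₀ : ℝ} {n : ℕ} (hs : Convex ℝ s) (hs' : UniqueDiffOn ℝ s) (hx₀ : x₀ ∈ s)
    (hf : ContDiffOn ℝ (n + 1) f s) (hzero : ∀ i < n, iteratedDerivWithin i f s x₀ = 0) :
    Tendsto (fun x ↦ (x - x₀) * derivWithin f s x / (x - x₀) ^ n) (𝓝[s \ {x₀}] x₀)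
      (𝓝 (n * (iteratedDerivWithin n f s x₀ / n !))) := by
  have hderiv := hf.derivWithin hs' le_rfl
  obtain _ | m := n
  · have hcont : ContinuousWithinAt (fun x ↦ (x - x₀) * derivWithin f s x) s x₀ :=
      (continuous_sub_right x₀).continuousWithinAt.mul (hderiv.continuousOn x₀ hx₀)
    simpa using hcont.tendsto.mono_left (nhdsWithin_mono x₀ (sdiff_subset (t := {x₀})))
  · have hquot := tendsto_div_pow_of_iteratedDerivWithin_eq_zero (n := m) hs hx₀
      (hderiv.of_le (by norm_cast; omega)) fun i hi ↦ by
        rw [← iteratedDerivWithin_succ']; exact hzero (i + 1) (by omega)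
    have hfac : iteratedDerivWithin m (derivWithin f s) s x₀ / m ! =
        (m + 1 : ℕ) * (iteratedDerivWithin (m + 1) f s x₀ / (m + 1)!) := by
      rw [← iteratedDerivWithin_succ', Nat.factorial_succ]
      push_cast
      field_simp
    rw [← hfac]
    refine hquot.congr' ?_
    filter_upwards [self_mem_nhdsWithin] with x hx
    rw [pow_succ', mul_div_mul_left _ _ (sub_ne_zero.2 hx.2)]

theorem tendsto_mul_derivWithin_div_of_iteratedDerivWithin_ne_zero {f : ℝ → ℝ} {s : Set ℝ}
    {x₀ : ℝ} {n : ℕ} (hs : Convex ℝ s) (hs' : UniqueDiffOn ℝ s) (hx₀ : x₀ ∈ s)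
    (hf : ContDiffOn ℝ (n + 1) f s) (hzero : ∀ i < n, iteratedDerivWithin i f s x₀ = 0)
    (hne : iteratedDerivWithin n f s x₀ ≠ 0) :
    Tendsto (fun x ↦ (x - x₀) * derivWithin f s x / f x) (𝓝[s \ {x₀}] x₀) (𝓝 n) := by
  have hlim_ne : iteratedDerivWithin n f s x₀ / n ! ≠ 0 := by positivity
  have hratio :=
    (tendsto_mul_derivWithin_div_pow_of_iteratedDerivWithin_eq_zero hs hs' hx₀ hf hzero).div
      (tendsto_div_pow_of_iteratedDerivWithin_eq_zero hs hx₀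
        (hf.of_le (by norm_cast; omega)) hzero) hlim_ne
  rw [mul_div_cancel_right₀ _ hlim_ne] at hratio
  refine hratio.congr' ?_
  filter_upwards [self_mem_nhdsWithin] with x hx
  exact div_div_div_cancel_right₀ (pow_ne_zero n (sub_ne_zero.2 hx.2)) _ _

theorem antitoneOn_sq_of_logDeriv_nonpos {g : ℝ → ℝ} {D : Set ℝ} (hD : Convex ℝ D)
    (hcont : ContinuousOn g D) (hdiff : ∀ x ∈ interior D, DifferentiableAt ℝ g x)
    (hlog : ∀ x ∈ interior D, logDeriv g x ≤ 0) : AntitoneOn (fun x ↦ g x ^ 2) D := by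
  refine antitoneOn_of_deriv_nonpos hD (hcont.pow 2)
    (fun x hx ↦ ((hdiff x hx).pow 2).differentiableWithinAt) fun x hx ↦ ?_
  have hderiv : deriv (fun x ↦ g x ^ 2) x = 2 * (g x ^ 2 * logDeriv g x) := by
    rw [((hdiff x hx).hasDerivAt.fun_pow 2).deriv, logDeriv_apply]
    by_cases hgx : g x = 0
    · simp [hgx]
    · field_simp
      ring
  rw [hderiv]
  exact mul_nonpos_of_nonneg_of_nonpos zero_le_two
    (mul_nonpos_of_nonneg_of_nonpos (sq_nonneg _) (hlog x hx))

theorem logDeriv_div_sub_pow {f : ℝ → ℝ} {x₀ x : ℝ} (hx : x ≠ x₀) (hf : DifferentiableAt ℝ f x)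
    (hfx : f x ≠ 0) (n : ℕ) :
    logDeriv (fun y ↦ f y / (y - x₀) ^ n) x = logDeriv f x - n / (x - x₀) := by
  have hsub : DifferentiableAt ℝ (fun y ↦ y - x₀) x := by fun_prop
  have hlog : logDeriv (fun y ↦ y - x₀) x = 1 / (x - x₀) := by simp [logDeriv_apply]
  rw [logDeriv_div (g := fun y ↦ (y - x₀) ^ n) x hfx (pow_ne_zero n (sub_ne_zero.2 hx)) hf
    (hsub.fun_pow n),
    logDeriv_fun_pow hsub, hlog, mul_one_div]

theorem not_tendsto_div_pow_zero_of_mul_logDeriv_le {f : ℝ → ℝ} {x₀ : ℝ} {n : ℕ}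
    (hdiff : ∀ᶠ x in 𝓝[>] x₀, DifferentiableAt ℝ f x) (hne : ∀ᶠ x in 𝓝[>] x₀, f x ≠ 0)
    (hlog : ∀ᶠ x in 𝓝[>] x₀, (x - x₀) * logDeriv f x ≤ n) :
    ¬ Tendsto (fun x ↦ f x / (x - x₀) ^ n) (𝓝[>] x₀) (𝓝 0) := by
  intro hlim
  obtain ⟨b, hb, hsub⟩ := mem_nhdsGT_iff_exists_Ioo_subset.1 (hdiff.and (hne.and hlog))
  have hgdiff : ∀ x ∈ Ioo x₀ b, DifferentiableAt ℝ (fun y ↦ f y / (y - x₀) ^ n) x := fun x hx ↦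
    (hsub hx).1.fun_div (by fun_prop) (pow_ne_zero n (sub_pos.2 hx.1).ne')
  have hanti : AntitoneOn (fun x ↦ (f x / (x - x₀) ^ n) ^ 2) (Ioo x₀ b) := by
    refine antitoneOn_sq_of_logDeriv_nonpos (convex_Ioo x₀ b)
      (fun x hx ↦ (hgdiff x hx).continuousAt.continuousWithinAt)
      (by rwa [interior_Ioo]) fun x hx ↦ ?_
    rw [interior_Ioo] at hx
    obtain ⟨hfx, hfx_ne, hfx_log⟩ := hsub hx
    rw [logDeriv_div_sub_pow hx.1.ne' hfx hfx_ne, sub_nonpos, le_div_iff₀' (sub_pos.2 hx.1)]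
    exact hfx_log
  obtain ⟨c, hc⟩ := exists_between (mem_Ioi.1 hb)
  have hpos : 0 < (f c / (c - x₀) ^ n) ^ 2 :=
    sq_pos_of_ne_zero (div_ne_zero (hsub hc).2.1 (pow_ne_zero n (sub_pos.2 hc.1).ne'))
  have hle : (f c / (c - x₀) ^ n) ^ 2 ≤ 0 ^ 2 := by
    refine ge_of_tendsto (hlim.pow 2) ?_
    filter_upwards [Ioo_mem_nhdsGT hc.1] with x hx
    exact hanti ⟨hx.1, hx.2.trans hc.2⟩ hc hx.2.le
  exact hpos.not_ge (by simpa using hle)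

theorem exists_iteratedDerivWithin_ne_zero_of_mul_logDeriv_le {f : ℝ → ℝ} {a b C : ℝ} (hab : a < b)
    (hf : ContDiffOn ℝ ∞ f (Icc a b)) (hne : ∀ᶠ x in 𝓝[>] a, f x ≠ 0)
    (hlog : ∀ᶠ x in 𝓝[>] a, (x - a) * logDeriv f x ≤ C) :
    ∃ n, iteratedDerivWithin n f (Icc a b) a ≠ 0 := by
  by_contra! hflat
  obtain ⟨n, hn⟩ := exists_nat_ge C
  have hdiff : ∀ᶠ x in 𝓝[>] a, DifferentiableAt ℝ f x := by
    filter_upwards [Ioo_mem_nhdsGT hab] with x hx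
    exact (hf.contDiffAt (Icc_mem_nhds hx.1 hx.2)).differentiableAt (by simp)
  have hlim := tendsto_div_pow_of_iteratedDerivWithin_eq_zero (convex_Icc a b)
    (left_mem_Icc.2 hab.le) (hf.of_le (by exact_mod_cast le_top)) fun i (_ : i < n) ↦ hflat i
  rw [Icc_sdiff_left, nhdsWithin_Ioc_eq_nhdsGT hab, hflat n, zero_div] at hlim
  exact not_tendsto_div_pow_zero_of_mul_logDeriv_le hdiff hne
    (hlog.mono fun x hx ↦ hx.trans hn) hlim

theorem exists_order_of_tendsto_mul_logDeriv {f : ℝ → ℝ} {a b c : ℝ} (hab : a < b)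
    (hf : ContDiffOn ℝ ∞ f (Icc a b)) (hne : ∀ᶠ x in 𝓝[>] a, f x ≠ 0)
    (hlog : Tendsto (fun x ↦ (x - a) * logDeriv f x) (𝓝[>] a) (𝓝 c)) :
    ∃ n : ℕ, c = n ∧ iteratedDerivWithin n f (Icc a b) a ≠ 0 ∧
      Tendsto (fun x ↦ f x / (x - a) ^ n) (𝓝[>] a)
        (𝓝 (iteratedDerivWithin n f (Icc a b) a / n !)) := by
  classical
  have hfinite := exists_iteratedDerivWithin_ne_zero_of_mul_logDeriv_le hab hf hne
    (hlog.eventually_le_const (lt_add_one c))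
  obtain ⟨n, hn, hmin⟩ : ∃ n, iteratedDerivWithin n f (Icc a b) a ≠ 0 ∧
      ∀ i < n, iteratedDerivWithin i f (Icc a b) a = 0 :=
    ⟨Nat.find hfinite, Nat.find_spec hfinite, fun i hi ↦ not_not.1 (Nat.find_min hfinite hi)⟩
  have ha : a ∈ Icc a b := left_mem_Icc.2 hab.le
  have hquot := tendsto_div_pow_of_iteratedDerivWithin_eq_zero (convex_Icc a b) ha
    (hf.of_le (by exact_mod_cast le_top)) hmin
  have hlog' := tendsto_mul_derivWithin_div_of_iteratedDerivWithin_ne_zero (convex_Icc a b)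
    (uniqueDiffOn_Icc hab) ha (hf.of_le (by exact_mod_cast le_top)) hmin hn
  rw [Icc_sdiff_left, nhdsWithin_Ioc_eq_nhdsGT hab] at hquot hlog'
  refine ⟨n, tendsto_nhds_unique hlog (hlog'.congr' ?_), hn, hquot⟩
  filter_upwards [Ioo_mem_nhdsGT hab] with x hx
  rw [derivWithin_of_mem_nhds (Icc_mem_nhds hx.1 hx.2), logDeriv_apply, mul_div_assoc]

theorem tendsto_sin_div_self : Tendsto (fun θ : ℝ ↦ sin θ / θ) (𝓝[≠] 0) (𝓝 1) := by
  simpa [div_eq_inv_mul] using (hasDerivAt_sin 0).tendsto_slope_zero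

theorem tendsto_div_sin_pow {f : ℝ → ℝ} {l : Filter ℝ} {c : ℝ} {n : ℕ} (hl : l ≤ 𝓝[≠] 0)
    (hf : Tendsto (fun θ ↦ f θ / θ ^ n) l (𝓝 c)) :
    Tendsto (fun θ ↦ f θ / sin θ ^ n) l (𝓝 c) := by
  have hquot := hf.div ((tendsto_sin_div_self.mono_left hl).pow n) (by simp)
  rw [one_pow, div_one] at hquot
  refine hquot.congr' ?_
  filter_upwards [hl self_mem_nhdsWithin] with θ hθ
  rw [Pi.div_apply, div_pow, div_div_div_cancel_right₀ (pow_ne_zero n hθ)]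

theorem tendsto_mul_logDeriv_astigmatism {r₁ r₂ s : ℝ → ℝ} {μ : ℝ} (hs : s = r₂ - r₁)
    (hdiff : ∀ᶠ θ in 𝓝[>] 0, DifferentiableAt ℝ s θ) (hne : ∀ᶠ θ in 𝓝[>] 0, s θ ≠ 0)
    (hCM : ∀ᶠ θ in 𝓝[>] 0, HasDerivAt r₁ (s θ * (cos θ / sin θ)) θ)
    (hμ : Tendsto (fun θ ↦ deriv r₂ θ / deriv r₁ θ) (𝓝[>] 0) (𝓝 μ)) :
    Tendsto (fun θ ↦ θ * logDeriv s θ) (𝓝[>] 0) (𝓝 (μ - 1)) := by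
  have hsin : Tendsto (fun θ : ℝ ↦ sin θ / θ) (𝓝[>] 0) (𝓝 1) :=
    tendsto_sin_div_self.mono_left (nhdsGT_le_nhdsNE 0)
  have hcos : Tendsto cos (𝓝[>] 0) (𝓝 1) :=
    (continuous_cos.tendsto' 0 1 cos_zero).mono_left nhdsWithin_le_nhds
  have hlim := ((hμ.sub_const 1).mul hcos).div hsin one_ne_zero
  rw [mul_one, div_one] at hlim
  refine hlim.congr' ?_
  filter_upwards [self_mem_nhdsWithin, hdiff, hne, hCM, hsin.eventually_ne one_ne_zero,
    hcos.eventually_ne one_ne_zero] with θ hθ hsdiff hsne hr₁ hsinθ hcosθ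
  have hr₂ : deriv r₂ θ = s θ * (cos θ / sin θ) + deriv s θ := by
    rw [← (hr₁.add hsdiff.hasDerivAt).deriv, hs, add_sub_cancel]
  have hsinθ' : sin θ ≠ 0 := fun h ↦ hsinθ (by rw [h, zero_div])
  have hθ' : θ ≠ 0 := (mem_Ioi.1 hθ).ne'
  simp only [Pi.div_apply, hr₂, hr₁.deriv, logDeriv_apply]
  field_simp
  ring

theorem exists_umbilic_slope_eq_order_add_one {δ : ℝ} (hδ : 0 < δ) {r₁ r₂ s : ℝ → ℝ}
    (hs : s = r₂ - r₁) (hsmooth : ContDiffOn ℝ ∞ s (Icc 0 δ))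
    (hne : ∀ᶠ θ in 𝓝[>] 0, s θ ≠ 0)
    (hCM : ∀ᶠ θ in 𝓝[>] 0, HasDerivAt r₁ (s θ * (cos θ / sin θ)) θ) {μ : ℝ}
    (hμ : Tendsto (fun θ ↦ deriv r₂ θ / deriv r₁ θ) (𝓝[>] 0) (𝓝 μ)) :
    ∃ n : ℕ, μ = n + 1 ∧ iteratedDerivWithin n s (Icc 0 δ) 0 ≠ 0 ∧
      Tendsto (fun θ ↦ s θ / sin θ ^ n) (𝓝[>] 0)
        (𝓝 (iteratedDerivWithin n s (Icc 0 δ) 0 / n !)) := by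
  have hdiff : ∀ᶠ θ in 𝓝[>] 0, DifferentiableAt ℝ s θ := by
    filter_upwards [Ioo_mem_nhdsGT hδ] with θ hθ
    exact (hsmooth.contDiffAt (Icc_mem_nhds hθ.1 hθ.2)).differentiableAt (by simp)
  have hlog := tendsto_mul_logDeriv_astigmatism hs hdiff hne hCM hμ
  obtain ⟨n, hn, hderiv, hquot⟩ := exists_order_of_tendsto_mul_logDeriv hδ hsmooth hne
    (by simpa only [sub_zero] using hlog)
  simp only [sub_zero] at hquot
  exact ⟨n, sub_eq_iff_eq_add.1 hn, hderiv, tendsto_div_sin_pow (nhdsGT_le_nhdsNE 0) hquot⟩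

theorem smooth_slope_quantisation_general {δ : ℝ} (hδ : 0 < δ) {r₁ r₂ s : ℝ → ℝ}
    (hs : s = r₂ - r₁) (hsmooth : ContDiffOn ℝ ∞ s (Icc 0 δ)) (hs0 : s 0 = 0)
    (hodd : ∀ m : ℕ, iteratedDerivWithin (2 * m + 1) s (Icc 0 δ) 0 = 0)
    (hne : ∀ᶠ θ in 𝓝[>] 0, s θ ≠ 0)
    (hCM : ∀ᶠ θ in 𝓝[>] 0, HasDerivAt r₁ (s θ * (cos θ / sin θ)) θ) {μ : ℝ}
    (hμ : Tendsto (fun θ ↦ deriv r₂ θ / deriv r₁ θ) (𝓝[>] 0) (𝓝 μ)) :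
    ∃ k : ℕ, 1 ≤ k ∧ μ = 2 * k + 1 ∧ iteratedDerivWithin (2 * k) s (Icc 0 δ) 0 ≠ 0 ∧
      Tendsto (fun θ ↦ s θ / sin θ ^ (2 * k)) (𝓝[>] 0)
        (𝓝 (iteratedDerivWithin (2 * k) s (Icc 0 δ) 0 / (2 * k)!)) := by
  obtain ⟨n, hμn, hn, hlim⟩ := exists_umbilic_slope_eq_order_add_one hδ hs hsmooth hne hCM hμ
  obtain ⟨k, rfl | rfl⟩ := n.even_or_odd'
  · refine ⟨k, Nat.one_le_iff_ne_zero.2 ?_, by simpa using hμn, hn, hlim⟩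
    rintro rfl
    exact hn (by simpa using hs0)
  · exact absurd (hodd k) hn

/-- Quantisation of the umbilic slope for smooth surfaces: if the umbilic slope
`μ = lim_{θ→0} r₂'/r₁'` exists and is finite, then `μ = 2k+1` for an integer `k ≥ 1`,
and `s/sin^{2k} θ → s^{(2k)}(0)/(2k)! ≠ 0` as `θ → 0`. -/
theorem smooth_slope_quantisation
    (δ : ℝ) (hδ : δ ∈ Set.Ioo 0 (π/2))
    (r₁ r₂ : ℝ → ℝ) (h₁ : ContDiff ℝ (⊤ : ℕ∞) r₁) (h₂ : ContDiff ℝ (⊤ : ℕ∞) r₂)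
    (s : ℝ → ℝ) (hsdef : s = fun θ => r₂ θ - r₁ θ)
    (hs0 : s 0 = 0)
    (hodd : ∀ m : ℕ, iteratedDeriv (2*m+1) s 0 = 0)
    (hsne : ∀ θ ∈ Set.Ioc 0 δ, s θ ≠ 0)
    (hCM : ∀ θ ∈ Set.Ioc 0 δ, deriv r₁ θ = s θ * (Real.cos θ / Real.sin θ))
    (μ : ℝ)
    (hμ : Tendsto (fun θ => deriv r₂ θ / deriv r₁ θ) (𝓝[>] (0:ℝ)) (𝓝 μ)) :
    ∃ k : ℕ, 1 ≤ k ∧ μ = 2*(k:ℝ)+1 ∧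
      iteratedDeriv (2*k) s 0 ≠ 0 ∧
      Tendsto (fun θ => s θ / Real.sin θ ^ (2*k)) (𝓝[>] (0:ℝ))
        (𝓝 (iteratedDeriv (2*k) s 0 / (Nat.factorial (2*k)))) := by
  have hsmooth : ContDiff ℝ ∞ s := hsdef ▸ h₂.sub h₁
  have hwithin (n : ℕ) : iteratedDerivWithin n s (Icc 0 δ) 0 = iteratedDeriv n s 0 :=
    iteratedDerivWithin_eq_iteratedDeriv (uniqueDiffOn_Icc hδ.1)
      (hsmooth.of_le (by exact_mod_cast le_top)).contDiffAt (left_mem_Icc.2 hδ.1.le)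
  have hCM' : ∀ θ ∈ Ioc 0 δ, HasDerivAt r₁ (s θ * (cos θ / sin θ)) θ := fun θ hθ ↦
    (h₁.differentiable (by simp) θ).hasDerivAt.congr_deriv (hCM θ hθ)
  have hpole : Ioc 0 δ ∈ 𝓝[>] (0 : ℝ) := Ioc_mem_nhdsGT hδ.1
  simpa only [hwithin] using smooth_slope_quantisation_general hδ.1 hsdef hsmooth.contDiffOn hs0
    (by simpa only [hwithin] using hodd) (mem_of_superset hpole hsne)
    (mem_of_superset hpole hCM') hμ
end

section
/- Let a, b, c ∈ ℝ with b ≠ 0, and let r₁, r₂ : (0,π) → ℝ be continuously differentiable functions satisfying the derived Codazzi–Mainardi equation r₁'(θ) = (r₂(θ) − r₁(θ))·cot θ and the linear curvature relationship a·r₁(θ) + b·r₂(θ) + c = 0 on (0,π). Then there exists a constant C₀ ∈ ℝ such that r₂(θ) − r₁(θ) = C₀·(sin θ)^{2n+2} for all θ ∈ (0,π), where n is determined by −a/b = 2n + 3 (so that 2n + 2 = −(a+b)/b). -/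
open Real Set

/-!
The linear relation makes the astigmatism `s = r₂ − r₁` an affine function of `r₁` with slope
`−(a+b)/b = 2n+2`, so the Codazzi–Mainardi equation becomes the linear equation
`s' = (2n+2) (cos/sin) s`, whose coefficient is `2n+2` times the logarithmic derivative of `sin`.
Hence `sin ^ (−(2n+2)) · s` has vanishing derivative.
-/

section LogarithmicDerivative

variable {E : Type*} [NormedAddCommGroup E] [NormedSpace ℝ E] {f : ℝ → E} {g : ℝ → ℝ} {p : ℝ}

theorem hasDerivAt_rpow_neg_smul_zero {g' x : ℝ} (hg : HasDerivAt g g' x) (hgx : g x ≠ 0)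
    (hf : HasDerivAt f ((p * (g' / g x)) • f x) x) :
    HasDerivAt (fun y ↦ g y ^ (-p) • f y) 0 x := by
  refine ((hg.rpow_const (p := -p) (Or.inl hgx)).fun_smul hf).congr_deriv ?_
  have hcoeff : g x ^ (-p) * (p * (g' / g x)) + g' * -p * g x ^ (-p - 1) = 0 := by
    rw [rpow_sub_one hgx]
    ring
  rw [smul_smul, ← add_smul, hcoeff, zero_smul]

theorem exists_eqOn_rpow_smul_of_hasDerivAt {g' : ℝ → ℝ} {U : Set ℝ}
    (hU : IsOpen U) (hUconn : IsPreconnected U)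
    (hg : ∀ x ∈ U, HasDerivAt g (g' x) x) (hpos : ∀ x ∈ U, 0 < g x)
    (hf : ∀ x ∈ U, HasDerivAt f ((p * (g' x / g x)) • f x) x) :
    ∃ C : E, EqOn f (fun x ↦ g x ^ p • C) U := by
  have hderiv : ∀ x ∈ U, HasDerivAt (fun y ↦ g y ^ (-p) • f y) 0 x := fun x hx ↦
    hasDerivAt_rpow_neg_smul_zero (hg x hx) (hpos x hx).ne' (hf x hx)
  obtain ⟨C, hC⟩ := hU.exists_is_const_of_deriv_eq_zero hUconn
    (fun x hx ↦ (hderiv x hx).differentiableAt.differentiableWithinAt)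
    (fun x hx ↦ (hderiv x hx).deriv)
  refine ⟨C, fun x hx ↦ ?_⟩
  calc f x = (g x ^ p * g x ^ (-p)) • f x := by
        rw [← rpow_add (hpos x hx), add_neg_cancel, rpow_zero, one_smul]
    _ = g x ^ p • C := by rw [mul_smul, hC x hx]

end LogarithmicDerivative

theorem sub_eq_of_linear_relation {K : Type*} [Field K] {a b c x y : K} (hb : b ≠ 0)
    (h : a * x + b * y + c = 0) : y - x = (-a / b - 1) * x - c / b := by
  field_simp
  linear_combination h

theorem hasDerivAt_sub_of_linear_relation {𝕜 : Type*} [NontriviallyNormedField 𝕜]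
    {a b c r₁' x : 𝕜} {r₁ r₂ : 𝕜 → 𝕜} (hb : b ≠ 0) (hr₁ : HasDerivAt r₁ r₁' x)
    (hlin : ∀ᶠ y in nhds x, a * r₁ y + b * r₂ y + c = 0) :
    HasDerivAt (fun y ↦ r₂ y - r₁ y) ((-a / b - 1) * r₁') x :=
  ((hr₁.const_mul (-a / b - 1)).sub_const (c / b)).congr_of_eventuallyEq
    (hlin.mono fun _ hy ↦ sub_eq_of_linear_relation hb hy)

theorem linear_hopf_sphere_astigmatism_general {a b c n : ℝ} (hb : b ≠ 0)
    (hn : -a / b = 2 * n + 3) {r₁ r₂ : ℝ → ℝ} {U : Set ℝ} (hU : IsOpen U)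
    (hUconn : IsPreconnected U) (hsin : ∀ θ ∈ U, 0 < sin θ)
    (hCM : ∀ θ ∈ U, HasDerivAt r₁ ((r₂ θ - r₁ θ) * (cos θ / sin θ)) θ)
    (hlin : ∀ θ ∈ U, a * r₁ θ + b * r₂ θ + c = 0) :
    ∃ C₀ : ℝ, ∀ θ ∈ U, r₂ θ - r₁ θ = C₀ * sin θ ^ (2 * n + 2) := by
  have hslope : -a / b - 1 = 2 * n + 2 := by linear_combination hn
  have hastig : ∀ θ ∈ U, HasDerivAt (fun φ ↦ r₂ φ - r₁ φ)
      (((2 * n + 2) * (cos θ / sin θ)) • (r₂ θ - r₁ θ)) θ := fun θ hθ ↦ by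
    have hlin_near := Filter.eventually_of_mem (hU.mem_nhds hθ) hlin
    refine (hasDerivAt_sub_of_linear_relation hb (hCM θ hθ) hlin_near).congr_deriv ?_
    rw [hslope, smul_eq_mul]
    ring
  obtain ⟨C₀, hC₀⟩ := exists_eqOn_rpow_smul_of_hasDerivAt hU hUconn
    (fun θ _ ↦ hasDerivAt_sin θ) hsin hastig
  exact ⟨C₀, fun θ hθ ↦ (hC₀ hθ).trans (mul_comm _ _)⟩

/-- Linear Hopf spheres: if `r₁, r₂` satisfy the derived Codazzi–Mainardi equation and the
linear curvature relationship `a·r₁ + b·r₂ + c = 0` on `(0,π)`, then the astigmatism is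
`r₂ − r₁ = C₀·sin^{2n+2} θ` where `−a/b = 2n+3`. -/
theorem linear_hopf_sphere_astigmatism
    (a b c n : ℝ) (hb : b ≠ 0) (hn : -a/b = 2*n+3)
    (r₁ r₂ : ℝ → ℝ)
    (h₁ : ContDiffOn ℝ 1 r₁ (Set.Ioo 0 π))
    (h₂ : ContDiffOn ℝ 1 r₂ (Set.Ioo 0 π))
    (hCM : ∀ θ ∈ Set.Ioo 0 π, deriv r₁ θ = (r₂ θ - r₁ θ) * (Real.cos θ / Real.sin θ))
    (hlin : ∀ θ ∈ Set.Ioo 0 π, a * r₁ θ + b * r₂ θ + c = 0) :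
    ∃ C₀ : ℝ, ∀ θ ∈ Set.Ioo 0 π, r₂ θ - r₁ θ = C₀ * Real.sin θ ^ (2*n+2) :=
  linear_hopf_sphere_astigmatism_general hb hn isOpen_Ioo isPreconnected_Ioo
    (fun _ ↦ sin_pos_of_mem_Ioo) (fun θ hθ ↦ hCM θ hθ ▸
      ((h₁.differentiableOn one_ne_zero).differentiableAt (Ioo_mem_nhds hθ.1 hθ.2)).hasDerivAt) hlin
end

section
/- Let n ∈ ℝ and let s : (0,π) → ℝ be twice continuously differentiable. Then for all θ ∈ (0,π): 𝓛ⁿₙ(s/sin^{n+2}θ) = s''(θ)/sin^{n+2}θ − (2n+3)·cos θ·s'(θ)/sin^{n+3}θ + 2(n+1)(1+cos²θ)·s(θ)/sin^{n+4}θ, where 𝓛ⁿₙ f = f'' + cot θ·f' + (n(n+1) − n²/sin²θ)·f. -/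
open Real Set

/-!
For positive `g` the quotient rule takes the form
`(f / g ^ p)' = f' / g ^ p - p * g' * f / g ^ (p + 1)`, whose right-hand side is again a difference
of such quotients, so a second application gives `(f / g ^ p)''`. With `g = sin`, the terms of
`𝓛^μ_ν (s / sin ^ p)` without derivatives of `s` combine to
`(p² cos² + (p + ν (ν + 1)) sin² - μ²) * s / sin ^ (p + 2)`, and for `p = n + 2`, `ν = μ = n` the
constant `n² = n² (sin² + cos²)` turns the bracket into `2 (n + 1) (1 + cos²)`.
-/

open scoped Topology

section QuotientByPower

variable {f f' g g' : ℝ → ℝ} {x p : ℝ}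

theorem hasDerivAt_div_rpow_const {a b : ℝ} (hf : HasDerivAt f a x) (hg : HasDerivAt g b x)
    (hpos : 0 < g x) :
    HasDerivAt (fun y => f y / g y ^ p) (a / g x ^ p - p * (b * f x) / g x ^ (p + 1)) x := by
  have hpow : g x ^ p ≠ 0 := (rpow_pos_of_pos hpos p).ne'
  refine (hf.fun_div (hg.rpow_const (Or.inl hpos.ne')) hpow).congr_deriv ?_
  rw [rpow_sub_one hpos.ne', rpow_add_one hpos.ne']
  field_simp

theorem hasDerivAt_deriv_div_rpow_const {a b : ℝ}
    (hf : ∀ᶠ y in 𝓝 x, HasDerivAt f (f' y) y) (hf' : HasDerivAt f' a x)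
    (hg : ∀ᶠ y in 𝓝 x, HasDerivAt g (g' y) y) (hg' : HasDerivAt g' b x) (hpos : 0 < g x) :
    HasDerivAt (deriv fun y => f y / g y ^ p)
      (a / g x ^ p - p * (2 * g' x * f' x + b * f x) / g x ^ (p + 1)
        + p * (p + 1) * g' x ^ 2 * f x / g x ^ (p + 2)) x := by
  have hfx := hf.self_of_nhds
  have hgx := hg.self_of_nhds
  have hderiv : (deriv fun y => f y / g y ^ p) =ᶠ[𝓝 x]
      fun y => f' y / g y ^ p - p * (g' y * f y) / g y ^ (p + 1) := by
    filter_upwards [hf, hg, hgx.continuousAt.eventually_const_lt hpos] with y hfy hgy hy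
    exact (hasDerivAt_div_rpow_const hfy hgy hy).deriv
  have hfirst := hasDerivAt_div_rpow_const (p := p) hf' hgx hpos
  have hsecond :=
    hasDerivAt_div_rpow_const (p := p + 1) ((hg'.fun_mul hfx).const_mul p) hgx hpos
  refine ((hfirst.fun_sub hsecond).congr_of_eventuallyEq hderiv).congr_deriv ?_
  rw [add_assoc p 1 1, one_add_one_eq_two]
  ring

end QuotientByPower

/-- The Legendre operator `𝓛^μ_ν` of degree `ν` and order `μ` in the polar angle `θ`. It is built
on `deriv`, hence meaningful only where `f` is twice differentiable and `sin θ ≠ 0`. -/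
noncomputable def legendreOperator (ν μ : ℝ) (f : ℝ → ℝ) (θ : ℝ) : ℝ :=
  deriv (deriv f) θ + cos θ / sin θ * deriv f θ + (ν * (ν + 1) - μ ^ 2 / sin θ ^ 2) * f θ

theorem legendre_of_quotient_general (ν μ p : ℝ) {s s' : ℝ → ℝ} {s'' θ : ℝ} (hθ : 0 < sin θ)
    (hs : ∀ᶠ φ in 𝓝 θ, HasDerivAt s (s' φ) φ) (hs' : HasDerivAt s' s'' θ) :
    legendreOperator ν μ (fun φ => s φ / sin φ ^ p) θ
      = s'' / sin θ ^ p - (2 * p - 1) * cos θ * s' θ / sin θ ^ (p + 1)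
        + (p ^ 2 * cos θ ^ 2 + (p + ν * (ν + 1)) * sin θ ^ 2 - μ ^ 2) * s θ
          / sin θ ^ (p + 2) := by
  have hfirst := hasDerivAt_div_rpow_const (p := p) hs.self_of_nhds (hasDerivAt_sin θ) hθ
  have hsecond := hasDerivAt_deriv_div_rpow_const (p := p) hs hs'
    (.of_forall hasDerivAt_sin) (hasDerivAt_cos θ) hθ
  rw [legendreOperator, hsecond.deriv, hfirst.deriv, rpow_add_one hθ.ne', rpow_add hθ, rpow_two]
  have hpow : sin θ ^ p ≠ 0 := (rpow_pos_of_pos hθ p).ne'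
  field_simp
  ring

theorem legendre_zeroth_order_coefficient (n θ : ℝ) :
    (n + 2) ^ 2 * cos θ ^ 2 + (n + 2 + n * (n + 1)) * sin θ ^ 2 - n ^ 2
      = 2 * (n + 1) * (1 + cos θ ^ 2) := by
  rw [sin_sq]
  ring

/-- Explicit expression of the Legendre operator applied to `s/sin^{n+2} θ`:
`𝓛ⁿₙ(s/sin^{n+2}θ) = s''/sin^{n+2}θ − (2n+3)·cos θ·s'/sin^{n+3}θ
  + 2(n+1)(1+cos²θ)·s/sin^{n+4}θ`. -/
theorem legendre_of_quotient
    (n : ℝ) (s : ℝ → ℝ) (hs : ContDiffOn ℝ 2 s (Set.Ioo 0 π)) :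
    ∀ θ ∈ Set.Ioo 0 π,
      deriv (deriv (fun φ => s φ / Real.sin φ ^ (n+2))) θ
        + (Real.cos θ / Real.sin θ) * deriv (fun φ => s φ / Real.sin φ ^ (n+2)) θ
        + (n*(n+1) - n^2 / Real.sin θ^2) * (s θ / Real.sin θ ^ (n+2))
      = deriv (deriv s) θ / Real.sin θ ^ (n+2)
        - (2*n+3) * Real.cos θ * deriv s θ / Real.sin θ ^ (n+3)
        + 2*(n+1)*(1 + Real.cos θ^2) * s θ / Real.sin θ ^ (n+4) := by
  intro θ hθ
  have hnhds : Ioo 0 π ∈ 𝓝 θ := isOpen_Ioo.mem_nhds hθ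
  have hs₁ : ∀ᶠ φ in 𝓝 θ, HasDerivAt s (deriv s φ) φ :=
    (hs.differentiableOn two_ne_zero).eventually_differentiableAt hnhds |>.mono
      fun _ h => h.hasDerivAt
  have hs₂ : HasDerivAt (deriv s) (deriv (deriv s) θ) θ :=
    ((hs.deriv_of_isOpen isOpen_Ioo one_add_one_eq_two.le).differentiableOn one_ne_zero
      |>.differentiableAt hnhds).hasDerivAt
  have hL := legendre_of_quotient_general n n (n + 2) (sin_pos_of_mem_Ioo hθ) hs₁ hs₂
  rwa [legendre_zeroth_order_coefficient, show n + 2 + 1 = n + 3 by ring,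
    show n + 2 + 2 = n + 4 by ring, show 2 * (n + 2) - 1 = 2 * n + 3 by ring] at hL
end

section
/- Let n ∈ (−1,1), m > n + 3, and let s : (0,π) → ℝ be twice continuously differentiable such that for i = 0, 1, 2 there are constants c_i, d_i with s^{(i)}(θ)/sin^{m−i}θ → c_i as θ → 0 and s^{(i)}(θ)/sin^{m−i}θ → d_i as θ → π. Then 𝓛ⁿₙ(s/sin^{n+2}θ) ∈ L²_{sin θ}(0,π), and moreover s(θ)/sin²θ → 0 as θ → 0 and as θ → π. -/
open Real Set Filter Topology MeasureTheory

/-!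
Say that a function falls off to order `p` at a pole when its `i`-th derivative is
`O(sin ^ (p - i) θ)` there. By the Leibniz rule orders of fall-off add under products, and
`sin ^ q` has order `q`, so `s / sin ^ (n + 2)` has order `p = m - n - 2 > 1`. Each term of the
Legendre operator lowers the order by at most two, so the squared image times the weight `sin θ` is
`O(sin ^ (2 * p - 3) θ)`, which is integrable because `2 * p - 3 > -1`.
-/

open Asymptotics

theorem integrableOn_Ioo_of_isBigO {E F : Type*} [NormedAddCommGroup E] [NormedAddCommGroup F]
    {μ : Measure ℝ} {f : ℝ → E} {g : ℝ → F} {a b : ℝ} (hf : LocallyIntegrableOn f (Ioo a b) μ)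
    (hg : IntegrableOn g (Ioo a b) μ) (ha : f =O[𝓝[>] a] g) (hb : f =O[𝓝[<] b] g) :
    IntegrableOn f (Ioo a b) μ := by
  rcases le_or_gt b a with hba | hab
  · simp [Ioo_eq_empty_of_le hba]
  have ha_mem := Ioo_mem_nhdsGT hab
  have hb_mem := Ioo_mem_nhdsLT hab
  obtain ⟨s, hs, hfs⟩ := ha.integrableAtFilter ⟨_, ha_mem, hf.aestronglyMeasurable⟩ ⟨_, ha_mem, hg⟩
  obtain ⟨t, ht, hft⟩ := hb.integrableAtFilter ⟨_, hb_mem, hf.aestronglyMeasurable⟩ ⟨_, hb_mem, hg⟩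
  obtain ⟨u, hau, hus⟩ := mem_nhdsGT_iff_exists_Ioo_subset.1 hs
  obtain ⟨v, hvb, hvt⟩ := mem_nhdsLT_iff_exists_Ioo_subset.1 ht
  have hmid : IntegrableOn f (Icc u v) μ :=
    hf.integrableOn_compact_subset (Icc_subset_Ioo hau hvb) isCompact_Icc
  refine (((hfs.mono_set hus).union hmid).union (hft.mono_set hvt)).mono_set fun x hx => ?_
  rcases lt_or_ge x u with hxu | hux
  · exact .inl (.inl ⟨hx.1, hxu⟩)
  · rcases le_or_gt x v with hxv | hvx
    · exact .inl (.inr ⟨hux, hxv⟩)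
    · exact .inr ⟨hvx, hx.2⟩

theorem intervalIntegrable_sin_rpow_zero_pi_div_two {r : ℝ} (hr : -1 < r) :
    IntervalIntegrable (fun θ => sin θ ^ r) volume 0 (π / 2) := by
  have hsinc_pos : ∀ θ ∈ uIcc 0 (π / 2), 0 < sinc θ := by
    rw [uIcc_of_le (by positivity)]
    rintro θ ⟨hθ₀, hθ⟩
    rcases hθ₀.eq_or_lt with rfl | hθ₀
    · simp
    · rw [sinc_of_ne_zero hθ₀.ne']
      exact div_pos (sin_pos_of_pos_of_lt_pi hθ₀ (by linarith [pi_pos])) hθ₀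
  have hsinc : ContinuousOn (fun θ => sinc θ ^ r) (uIcc 0 (π / 2)) :=
    continuous_sinc.continuousOn.rpow_const fun θ hθ => .inl (hsinc_pos θ hθ).ne'
  refine ((intervalIntegral.intervalIntegrable_rpow' hr).mul_continuousOn hsinc).congr ?_
  intro θ hθ
  have hθ₀ : 0 < θ := (uIoc_of_le (show 0 ≤ π / 2 by positivity) ▸ hθ).1
  dsimp only
  rw [← mul_rpow hθ₀.le (hsinc_pos θ (uIoc_subset_uIcc hθ)).le, sinc_of_ne_zero hθ₀.ne',
    mul_div_cancel₀ _ hθ₀.ne']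

theorem integrableOn_sin_rpow {r : ℝ} (hr : -1 < r) :
    IntegrableOn (fun θ => sin θ ^ r) (Ioo 0 π) := by
  have hleft := intervalIntegrable_sin_rpow_zero_pi_div_two hr
  have hright : IntervalIntegrable (fun θ => sin θ ^ r) volume (π / 2) π := by
    simpa [sub_half] using (hleft.comp_sub_left π).symm
  exact (intervalIntegrable_iff_integrableOn_Ioo_of_le pi_pos.le).1 (hleft.trans hright)

section SinePowers

variable {a : ℝ}

theorem eventually_sin_pos : ∀ᶠ θ in 𝓝[Ioo 0 π] a, 0 < sin θ :=
  eventually_mem_nhdsWithin.mono fun _ => sin_pos_of_mem_Ioo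

theorem contDiffOn_sin_rpow (k : ℕ) (q : ℝ) : ContDiffOn ℝ k (fun θ => sin θ ^ q) (Ioo 0 π) :=
  contDiff_sin.contDiffOn.rpow_const_of_ne fun _ hθ => (sin_pos_of_mem_Ioo hθ).ne'

theorem isBigO_sin_rpow_of_le {p q : ℝ} (h : p ≤ q) :
    (fun θ => sin θ ^ q) =O[𝓝[Ioo 0 π] a] fun θ => sin θ ^ p :=
  .of_norm_eventuallyLE <| eventually_sin_pos.mono fun θ hθ => by
    dsimp only
    rw [norm_of_nonneg (rpow_nonneg hθ.le q)]
    exact rpow_le_rpow_of_exponent_ge hθ (sin_le_one θ) h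

theorem isBigO_mul_sin_rpow {f g : ℝ → ℝ} {p q r : ℝ}
    (hf : f =O[𝓝[Ioo 0 π] a] fun θ => sin θ ^ p) (hg : g =O[𝓝[Ioo 0 π] a] fun θ => sin θ ^ q)
    (hr : p + q = r) : (fun θ => f θ * g θ) =O[𝓝[Ioo 0 π] a] fun θ => sin θ ^ r :=
  (hf.mul hg).congr' .rfl <| eventually_sin_pos.mono fun _ hθ => hr ▸ (rpow_add hθ p q).symm

theorem isBigO_sin_pow_inv (j : ℕ) :
    (fun θ => (sin θ ^ j)⁻¹) =O[𝓝[Ioo 0 π] a] fun θ => sin θ ^ (-j : ℝ) :=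
  .of_norm_eventuallyLE <| eventually_sin_pos.mono fun θ hθ => by
    dsimp only
    rw [rpow_neg hθ.le, rpow_natCast, norm_of_nonneg (by positivity)]

theorem tendsto_zero_of_isBigO_sin_rpow {f : ℝ → ℝ} {p : ℝ} (ha : sin a = 0) (hp : 0 < p)
    (hf : f =O[𝓝[Ioo 0 π] a] fun θ => sin θ ^ p) : Tendsto f (𝓝[Ioo 0 π] a) (𝓝 0) := by
  have hsin : Tendsto (fun θ => sin θ ^ p) (𝓝 a) (𝓝 (sin a ^ p)) :=
    continuous_sin.continuousAt.rpow_const (.inr hp.le)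
  rw [ha, zero_rpow hp.ne'] at hsin
  exact hf.trans_tendsto (hsin.mono_left nhdsWithin_le_nhds)

theorem tendsto_div_sin_pow_of_isBigO {f : ℝ → ℝ} {m : ℝ} {j : ℕ} (ha : sin a = 0) (hj : j < m)
    (hf : f =O[𝓝[Ioo 0 π] a] fun θ => sin θ ^ m) :
    Tendsto (fun θ => f θ / sin θ ^ j) (𝓝[Ioo 0 π] a) (𝓝 0) :=
  tendsto_zero_of_isBigO_sin_rpow ha (sub_pos.2 hj) <| by
    simpa only [div_eq_mul_inv] using
      isBigO_mul_sin_rpow hf (isBigO_sin_pow_inv j) (sub_eq_add_neg m j).symm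

end SinePowers

/-- `HasFallOff k f p a` says that `f`, as a function on `(0, π)`, falls off to order `p` at `a`
together with its first `k` derivatives: `f⁽ⁱ⁾ = O(sin ^ (p - i))` for `i ≤ k`. For `k = 2` and `a`
a pole this is the fall-off condition on the astigmatism, with bounds in place of limits. -/
def HasFallOff (k : ℕ) (f : ℝ → ℝ) (p a : ℝ) : Prop :=
  ∀ i ≤ k, iteratedDeriv i f =O[𝓝[Ioo 0 π] a] fun θ => sin θ ^ (p - i)

namespace HasFallOff

variable {k : ℕ} {f g : ℝ → ℝ} {p q a : ℝ}

theorem isBigO (h : HasFallOff k f p a) : f =O[𝓝[Ioo 0 π] a] fun θ => sin θ ^ p := by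
  simpa using h 0 k.zero_le

theorem congr (h : HasFallOff k f p a) (hfg : EqOn f g (Ioo 0 π)) : HasFallOff k g p a :=
  fun i hi => (h i hi).congr' (eventually_mem_nhdsWithin.mono fun _ hθ =>
    hfg.iteratedDeriv_of_isOpen isOpen_Ioo i hθ) .rfl

theorem const_mul (c : ℝ) (h : HasFallOff k f p a) : HasFallOff k (fun θ => c * f θ) p a :=
  fun i hi =>
    ((h i hi).const_mul_left c).congr_left fun _ => (iteratedDeriv_const_mul_field c f).symm

theorem mul (hf : HasFallOff k f p a) (hg : HasFallOff k g q a)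
    (hfk : ContDiffOn ℝ k f (Ioo 0 π)) (hgk : ContDiffOn ℝ k g (Ioo 0 π)) :
    HasFallOff k (fun θ => f θ * g θ) (p + q) a := by
  intro i hi
  have hik : (i : WithTop ℕ∞) ≤ k := mod_cast hi
  have leibniz : (fun θ => ∑ j ∈ Finset.range (i + 1),
      (i.choose j : ℝ) * (iteratedDeriv j f θ * iteratedDeriv (i - j) g θ))
        =ᶠ[𝓝[Ioo 0 π] a] iteratedDeriv i fun θ => f θ * g θ :=
    eventually_mem_nhdsWithin.mono fun θ hθ => by
      have hθ' := isOpen_Ioo.mem_nhds hθ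
      simpa only [mul_assoc] using (iteratedDeriv_fun_mul
        ((hfk.contDiffAt hθ').of_le hik) ((hgk.contDiffAt hθ').of_le hik)).symm
  refine (IsBigO.fun_sum fun j hj => .const_mul_left ?_ _).congr' leibniz .rfl
  have hji : j ≤ i := Finset.mem_range_succ_iff.1 hj
  refine isBigO_mul_sin_rpow (hf j (hji.trans hi)) (hg (i - j) ((i.sub_le j).trans hi)) ?_
  push_cast [hji]
  ring

theorem of_deriv (hf : f =O[𝓝[Ioo 0 π] a] fun θ => sin θ ^ p)
    (hf' : HasFallOff k (deriv f) (p - 1) a) : HasFallOff (k + 1) f p a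
  | 0, _ => by simpa using hf
  | i + 1, hi => by
    rw [iteratedDeriv_succ']
    convert hf' i (by lia) using 3
    push_cast
    ring

theorem of_tendsto {c₀ c₁ c₂ : ℝ}
    (h₀ : Tendsto (fun θ => f θ / sin θ ^ p) (𝓝[Ioo 0 π] a) (𝓝 c₀))
    (h₁ : Tendsto (fun θ => deriv f θ / sin θ ^ (p - 1)) (𝓝[Ioo 0 π] a) (𝓝 c₁))
    (h₂ : Tendsto (fun θ => deriv (deriv f) θ / sin θ ^ (p - 2)) (𝓝[Ioo 0 π] a) (𝓝 c₂)) :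
    HasFallOff 2 f p a := by
  have isBigO_of_tendsto {g : ℝ → ℝ} {q c : ℝ}
      (h : Tendsto (fun θ => g θ / sin θ ^ q) (𝓝[Ioo 0 π] a) (𝓝 c)) :
      g =O[𝓝[Ioo 0 π] a] fun θ => sin θ ^ q :=
    isBigO_of_div_tendsto_nhds (eventually_sin_pos.mono fun _ hθ hq =>
      absurd hq (rpow_pos_of_pos hθ q).ne') c h
  refine of_deriv (isBigO_of_tendsto h₀) (of_deriv (isBigO_of_tendsto h₁) ?_)
  intro i hi
  obtain rfl := Nat.le_zero.1 hi
  simpa [sub_sub, one_add_one_eq_two] using isBigO_of_tendsto h₂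

end HasFallOff

theorem hasFallOff_cos (k : ℕ) (a : ℝ) : HasFallOff k cos 0 a := fun i _ =>
  calc iteratedDeriv i cos
    _ =O[𝓝[Ioo 0 π] a] fun θ => sin θ ^ (0 : ℝ) :=
      .of_norm_le fun θ => by simpa using abs_iteratedDeriv_cos_le_one i θ
    _ =O[𝓝[Ioo 0 π] a] fun θ => sin θ ^ (0 - i : ℝ) := isBigO_sin_rpow_of_le (by simp)

theorem hasFallOff_sin_rpow (k : ℕ) (q a : ℝ) : HasFallOff k (fun θ => sin θ ^ q) q a := by
  induction k generalizing q with
  | zero =>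
    intro i hi
    obtain rfl := Nat.le_zero.1 hi
    simpa using isBigO_refl _ _
  | succ k ih =>
    have hderiv : EqOn (fun θ => q * (cos θ * sin θ ^ (q - 1))) (deriv fun θ => sin θ ^ q)
        (Ioo 0 π) := fun θ hθ => by
      rw [((hasDerivAt_sin θ).rpow_const (.inl (sin_pos_of_mem_Ioo hθ).ne')).deriv]
      ring
    have hmul := (hasFallOff_cos k a).mul (ih (q - 1)) contDiff_cos.contDiffOn
      (contDiffOn_sin_rpow k (q - 1))
    rw [zero_add] at hmul
    exact .of_deriv (isBigO_refl _ _) ((hmul.const_mul q).congr hderiv)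

theorem HasFallOff.div_sin_rpow {k : ℕ} {f : ℝ → ℝ} {p a : ℝ} (h : HasFallOff k f p a)
    (hf : ContDiffOn ℝ k f (Ioo 0 π)) (q : ℝ) :
    HasFallOff k (fun θ => f θ / sin θ ^ q) (p - q) a := by
  rw [sub_eq_add_neg]
  refine (h.mul (hasFallOff_sin_rpow k (-q) a) hf (contDiffOn_sin_rpow k (-q))).congr ?_
  intro θ hθ
  dsimp only
  rw [rpow_neg (sin_pos_of_mem_Ioo hθ).le, div_eq_mul_inv]

section LegendreOperator

/-- The Legendre operator `𝓛ᵏ_ℓ f = f'' + cot θ f' + (ℓ (ℓ + 1) - k² / sin² θ) f` of degree `ℓ` and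
order `k`; the linear Hopf flow uses `ℓ = k = n`. -/
noncomputable def legendreOp (ℓ k : ℝ) (f : ℝ → ℝ) (θ : ℝ) : ℝ :=
  deriv (deriv f) θ + cos θ / sin θ * deriv f θ + (ℓ * (ℓ + 1) - k ^ 2 / sin θ ^ 2) * f θ

variable {ℓ k : ℝ} {f : ℝ → ℝ} {p a : ℝ}

theorem continuousOn_legendreOp (hf : ContDiffOn ℝ 2 f (Ioo 0 π)) :
    ContinuousOn (legendreOp ℓ k f) (Ioo 0 π) := by
  have hf' : ContDiffOn ℝ 1 (deriv f) (Ioo 0 π) :=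
    hf.deriv_of_isOpen isOpen_Ioo (by norm_num)
  have hf'' : ContinuousOn (deriv (deriv f)) (Ioo 0 π) :=
    hf'.continuousOn_deriv_of_isOpen isOpen_Ioo le_rfl
  have hsin : ∀ θ ∈ Ioo 0 π, sin θ ≠ 0 := fun _ hθ => (sin_pos_of_mem_Ioo hθ).ne'
  have hcot : ContinuousOn (fun θ => cos θ / sin θ) (Ioo 0 π) :=
    continuousOn_cos.div continuousOn_sin hsin
  have hpot : ContinuousOn (fun θ => ℓ * (ℓ + 1) - k ^ 2 / sin θ ^ 2) (Ioo 0 π) :=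
    continuousOn_const.sub (continuousOn_const.div (continuousOn_sin.pow 2)
      fun θ hθ => pow_ne_zero 2 (hsin θ hθ))
  exact (hf''.add (hcot.mul hf'.continuousOn)).add (hpot.mul hf.continuousOn)

theorem HasFallOff.legendreOp_isBigO (h : HasFallOff 2 f p a) :
    legendreOp ℓ k f =O[𝓝[Ioo 0 π] a] fun θ => sin θ ^ (p - 2) := by
  have hf' : deriv f =O[𝓝[Ioo 0 π] a] fun θ => sin θ ^ (p - 1) := by
    simpa [iteratedDeriv_one] using h 1 one_le_two
  have hf'' : deriv (deriv f) =O[𝓝[Ioo 0 π] a] fun θ => sin θ ^ (p - 2) := by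
    simpa [iteratedDeriv_succ] using h 2 le_rfl
  have hcot : (fun θ => cos θ / sin θ) =O[𝓝[Ioo 0 π] a] fun θ => sin θ ^ (-1 : ℝ) := by
    simpa [div_eq_mul_inv] using
      isBigO_mul_sin_rpow (hasFallOff_cos 0 a).isBigO (isBigO_sin_pow_inv 1)
        (by norm_num : (0 + -(1 : ℕ) : ℝ) = -1)
  have hpot : (fun θ => ℓ * (ℓ + 1) - k ^ 2 / sin θ ^ 2)
      =O[𝓝[Ioo 0 π] a] fun θ => sin θ ^ (-2 : ℝ) := by
    have hone : (fun _ => 1 : ℝ → ℝ) =O[𝓝[Ioo 0 π] a] fun θ => sin θ ^ (-2 : ℝ) := by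
      simpa using isBigO_sin_rpow_of_le (show (-2 : ℝ) ≤ 0 by norm_num)
    simpa [div_eq_mul_inv] using (hone.const_mul_left (ℓ * (ℓ + 1))).sub
      ((isBigO_sin_pow_inv 2).const_mul_left (k ^ 2))
  exact (hf''.add (isBigO_mul_sin_rpow hcot hf' (by ring))).add
    (isBigO_mul_sin_rpow hpot h.isBigO (by ring))

theorem integrableOn_legendreOp_sq_mul_sin (hf : ContDiffOn ℝ 2 f (Ioo 0 π)) (hp : 1 < p)
    (h₀ : HasFallOff 2 f p 0) (hπ : HasFallOff 2 f p π) :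
    IntegrableOn (fun θ => legendreOp ℓ k f θ ^ 2 * sin θ) (Ioo 0 π) := by
  have hbound {a : ℝ} (h : HasFallOff 2 f p a) : (fun θ => legendreOp ℓ k f θ ^ 2 * sin θ)
      =O[𝓝[Ioo 0 π] a] fun θ => sin θ ^ (2 * p - 3) := by
    have hsin : sin =O[𝓝[Ioo 0 π] a] fun θ => sin θ ^ (1 : ℝ) := by
      simpa only [rpow_one] using isBigO_refl _ _
    have hL := h.legendreOp_isBigO (ℓ := ℓ) (k := k)
    simpa only [sq] using isBigO_mul_sin_rpow (isBigO_mul_sin_rpow hL hL rfl) hsin (by ring)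
  have hcont : ContinuousOn (fun θ => legendreOp ℓ k f θ ^ 2 * sin θ) (Ioo 0 π) :=
    ((continuousOn_legendreOp hf).pow 2).mul continuousOn_sin
  refine integrableOn_Ioo_of_isBigO (hcont.locallyIntegrableOn measurableSet_Ioo)
    (integrableOn_sin_rpow (r := 2 * p - 3) (by linarith)) ?_ ?_
  · rw [← nhdsWithin_Ioo_eq_nhdsGT pi_pos]
    exact hbound h₀
  · rw [← nhdsWithin_Ioo_eq_nhdsLT pi_pos]
    exact hbound hπ

end LegendreOperator

theorem falloff_implies_flow_conditions_general {ℓ k q m : ℝ} (hqm : q + 1 < m) (hm : 2 < m)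
    {s : ℝ → ℝ} (hs : ContDiffOn ℝ 2 s (Ioo 0 π))
    (h₀ : HasFallOff 2 s m 0) (hπ : HasFallOff 2 s m π) :
    IntegrableOn (fun θ => legendreOp ℓ k (fun φ => s φ / sin φ ^ q) θ ^ 2 * sin θ) (Ioo 0 π) ∧
      Tendsto (fun θ => s θ / sin θ ^ 2) (𝓝[Ioo 0 π] 0) (𝓝 0) ∧
      Tendsto (fun θ => s θ / sin θ ^ 2) (𝓝[Ioo 0 π] π) (𝓝 0) := by
  have hu : ContDiffOn ℝ 2 (fun φ => s φ / sin φ ^ q) (Ioo 0 π) :=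
    hs.div (contDiffOn_sin_rpow 2 q) fun _ hθ => (rpow_pos_of_pos (sin_pos_of_mem_Ioo hθ) q).ne'
  exact ⟨integrableOn_legendreOp_sq_mul_sin hu (by linarith)
      (h₀.div_sin_rpow hs q) (hπ.div_sin_rpow hs q),
    tendsto_div_sin_pow_of_isBigO sin_zero (mod_cast hm) h₀.isBigO,
    tendsto_div_sin_pow_of_isBigO sin_pi (mod_cast hm) hπ.isBigO⟩

/-- If `s` is C² on `(0,π)` and `s^{(i)} ∼ c_i·sin^{m−i} θ` at `θ = 0` and
`s^{(i)} ∼ d_i·sin^{m−i} θ` at `θ = π` for `i = 0,1,2` with `m > n+3` and `n ∈ (−1,1)`,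
then `𝓛ⁿₙ(s/sin^{n+2}θ) ∈ L²_{sin θ}(0,π)` and `s/sin²θ → 0` at both poles. -/
theorem falloff_implies_flow_conditions
    (n m : ℝ) (hn : n ∈ Set.Ioo (-1:ℝ) 1) (hm : m > n + 3)
    (s : ℝ → ℝ) (hs : ContDiffOn ℝ 2 s (Set.Ioo 0 π))
    (c₀ c₁ c₂ d₀ d₁ d₂ : ℝ)
    (h00 : Tendsto (fun θ => s θ / Real.sin θ ^ m) (𝓝[Set.Ioo 0 π] 0) (𝓝 c₀))
    (h10 : Tendsto (fun θ => deriv s θ / Real.sin θ ^ (m-1)) (𝓝[Set.Ioo 0 π] 0) (𝓝 c₁))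
    (h20 : Tendsto (fun θ => deriv (deriv s) θ / Real.sin θ ^ (m-2))
      (𝓝[Set.Ioo 0 π] 0) (𝓝 c₂))
    (h0π : Tendsto (fun θ => s θ / Real.sin θ ^ m) (𝓝[Set.Ioo 0 π] π) (𝓝 d₀))
    (h1π : Tendsto (fun θ => deriv s θ / Real.sin θ ^ (m-1)) (𝓝[Set.Ioo 0 π] π) (𝓝 d₁))
    (h2π : Tendsto (fun θ => deriv (deriv s) θ / Real.sin θ ^ (m-2))
      (𝓝[Set.Ioo 0 π] π) (𝓝 d₂)) :
    IntegrableOn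
        (fun θ => (deriv (deriv (fun φ => s φ / Real.sin φ ^ (n+2))) θ
          + (Real.cos θ / Real.sin θ) * deriv (fun φ => s φ / Real.sin φ ^ (n+2)) θ
          + (n*(n+1) - n^2 / Real.sin θ^2) * (s θ / Real.sin θ ^ (n+2)))^2 * Real.sin θ)
        (Set.Ioo 0 π) ∧
      Tendsto (fun θ => s θ / Real.sin θ^2) (𝓝[Set.Ioo 0 π] 0) (𝓝 0) ∧
      Tendsto (fun θ => s θ / Real.sin θ^2) (𝓝[Set.Ioo 0 π] π) (𝓝 0) :=
  falloff_implies_flow_conditions_general (by linarith) (by linarith [hn.1]) hs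
    (.of_tendsto h00 h10 h20) (.of_tendsto h0π h1π h2π)
end

section
/- Let n ∈ (−1,1) and let s be twice continuously differentiable on [0,δ) for some δ > 0 with s(0) = 0 and s'(0) = 0. Then lim_{θ→0} [ s'(θ)/sin θ − 2(n+1)·cos θ·s(θ)/sin²θ ] = −n·s''(0); equivalently, lim_{θ→0} sin^{2n+1}θ·(d/dθ)(s(θ)/sin^{2n+2}θ) = −n·s''(0). In particular, this boundary limit vanishes if and only if n·lim_{θ→0}(s(θ)/sin²θ) = 0. -/
open Real Set Filter Topology

/-! By the quotient rule the weighted derivative `w ^ (p - 1) * (f / w ^ p)'` is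
`f' / w - p * w' * f / w ^ 2`. At a simple zero of `w` where `f` and `f'` vanish, `f' / w` tends to
`f'' / w'`, and l'Hôpital's rule turns this into `f / w ^ 2 → f'' / (2 * w' ^ 2)`, so the weighted
derivative tends to `(1 - p / 2) * (f'' / w')`. For `w = sin` and `p = 2 * n + 2` this is
`-n * f''`. -/

theorem tendsto_div_of_hasDerivWithinAt {𝕜 : Type*} [NontriviallyNormedField 𝕜] {f g : 𝕜 → 𝕜}
    {f' g' a : 𝕜} {t : Set 𝕜} (hf : HasDerivWithinAt f f' t a) (hg : HasDerivWithinAt g g' t a)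
    (hfa : f a = 0) (hga : g a = 0) (hg' : g' ≠ 0) :
    Tendsto (fun x => f x / g x) (𝓝[t \ {a}] a) (𝓝 (f' / g')) := by
  refine ((hasDerivWithinAt_iff_tendsto_slope.mp hf).div
    (hasDerivWithinAt_iff_tendsto_slope.mp hg) hg').congr' ?_
  filter_upwards [self_mem_nhdsWithin] with x hx
  have hxa : x - a ≠ 0 := sub_ne_zero.mpr hx.2
  simp [slope_def_field, hfa, hga, div_div_div_cancel_right₀ hxa]

section SimpleZero

variable {f f' w w' : ℝ → ℝ} {a c : ℝ} {t : Set ℝ}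

theorem tendsto_div_sq_of_hasDerivWithinAt (ht : Convex ℝ t) (ha : a ∈ t)
    (hf : ∀ x ∈ t, HasDerivWithinAt f (f' x) t x) (hf' : HasDerivWithinAt f' c t a)
    (hw : ∀ x ∈ t, HasDerivWithinAt w (w' x) t x) (hw' : ContinuousWithinAt w' t a)
    (hfa : f a = 0) (hf'a : f' a = 0) (hwa : w a = 0) (hw'a : w' a ≠ 0) :
    Tendsto (fun x => f x / w x ^ 2) (𝓝[t \ {a}] a) (𝓝 (c / (2 * w' a ^ 2))) := by
  have hle : 𝓝[t \ {a}] a ≤ 𝓝[t] a := nhdsWithin_mono a sdiff_subset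
  have hf0 : Tendsto f (𝓝[t \ {a}] a) (𝓝 0) := hfa ▸ (hf a ha).continuousWithinAt.mono_left hle
  have hw0 : Tendsto w (𝓝[t \ {a}] a) (𝓝 0) := hwa ▸ (hw a ha).continuousWithinAt.mono_left hle
  have hw'0 : Tendsto w' (𝓝[t \ {a}] a) (𝓝 (w' a)) := hw'.mono_left hle
  have hratio := tendsto_div_of_hasDerivWithinAt hf' (hw a ha) hf'a hwa hw'a
  refine HasDerivWithinAt.lhopital_zero_nhdsWithin_convex ht (f' := f')
    (g' := fun x => 2 * w x * w' x) ?_ ?_ ?_ hf0 (by simpa using hw0.pow 2) ?_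
  · filter_upwards [self_mem_nhdsWithin] with x hx using (hf x hx.1).mono sdiff_subset
  · filter_upwards [self_mem_nhdsWithin] with x hx
    simpa using ((hw x hx.1).mono sdiff_subset).fun_pow 2
  · filter_upwards [(hw a ha).eventually_ne hw'a (c := 0), hw'0.eventually_ne hw'a] with x hwx hw'x
    exact mul_ne_zero (mul_ne_zero two_ne_zero hwx) hw'x
  · have hlim : c / w' a / (2 * w' a) = c / (2 * w' a ^ 2) := by field_simp
    rw [← hlim]
    refine (hratio.div (hw'0.const_mul 2) (mul_ne_zero two_ne_zero hw'a)).congr fun x => ?_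
    rw [Pi.div_apply, div_div, ← mul_assoc, mul_comm (w x) 2]

theorem tendsto_div_sub_mul_div_sq_of_hasDerivWithinAt (p : ℝ) (ht : Convex ℝ t) (ha : a ∈ t)
    (hf : ∀ x ∈ t, HasDerivWithinAt f (f' x) t x) (hf' : HasDerivWithinAt f' c t a)
    (hw : ∀ x ∈ t, HasDerivWithinAt w (w' x) t x) (hw' : ContinuousWithinAt w' t a)
    (hfa : f a = 0) (hf'a : f' a = 0) (hwa : w a = 0) (hw'a : w' a ≠ 0) :
    Tendsto (fun x => f' x / w x - p * w' x * f x / w x ^ 2) (𝓝[t \ {a}] a)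
      (𝓝 ((1 - p / 2) * (c / w' a))) := by
  have hratio := tendsto_div_of_hasDerivWithinAt hf' (hw a ha) hf'a hwa hw'a
  have hw'0 : Tendsto w' (𝓝[t \ {a}] a) (𝓝 (w' a)) := hw'.mono_left (nhdsWithin_mono a sdiff_subset)
  have hsq := tendsto_div_sq_of_hasDerivWithinAt ht ha hf hf' hw hw' hfa hf'a hwa hw'a
  have hlim : c / w' a - p * w' a * (c / (2 * w' a ^ 2)) = (1 - p / 2) * (c / w' a) := by
    field_simp
  simpa only [mul_div_assoc, hlim] using hratio.sub ((hw'0.const_mul p).mul hsq)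

end SimpleZero

theorem rpow_sub_one_mul_deriv_div_rpow {f w : ℝ → ℝ} {f' w' x : ℝ} (p : ℝ)
    (hf : HasDerivAt f f' x) (hw : HasDerivAt w w' x) (hx : 0 < w x) :
    w x ^ (p - 1) * deriv (fun y => f y / w y ^ p) x = f' / w x - p * w' * f x / w x ^ 2 := by
  have hpow : w x ^ p = w x ^ (p - 1) * w x := by
    rw [← rpow_add_one hx.ne', sub_add_cancel]
  have hne : w x ^ (p - 1) ≠ 0 := (rpow_pos_of_pos hx _).ne'
  rw [(hf.fun_div (hw.rpow_const (Or.inl hx.ne')) (rpow_pos_of_pos hx p).ne').deriv, hpow]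
  field_simp

section Pole

variable {δ c : ℝ} {s s' : ℝ → ℝ}

theorem tendsto_div_sin_sq (hδ : 0 < δ)
    (hs' : ∀ θ ∈ Ico 0 δ, HasDerivWithinAt s (s' θ) (Ico 0 δ) θ)
    (hs'' : HasDerivWithinAt s' c (Ico 0 δ) 0) (h0 : s 0 = 0) (h1 : s' 0 = 0) :
    Tendsto (fun θ => s θ / sin θ ^ 2) (𝓝[Ioo 0 δ] 0) (𝓝 (c / 2)) := by
  simpa [Ico_sdiff_left] using tendsto_div_sq_of_hasDerivWithinAt (convex_Ico 0 δ)
    (left_mem_Ico.mpr hδ) hs' hs'' (fun θ _ => (hasDerivAt_sin θ).hasDerivWithinAt)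
    continuous_cos.continuousWithinAt h0 h1 sin_zero (by simp)

theorem tendsto_div_sub_mul_cos_div_sin_sq (n : ℝ) (hδ : 0 < δ)
    (hs' : ∀ θ ∈ Ico 0 δ, HasDerivWithinAt s (s' θ) (Ico 0 δ) θ)
    (hs'' : HasDerivWithinAt s' c (Ico 0 δ) 0) (h0 : s 0 = 0) (h1 : s' 0 = 0) :
    Tendsto (fun θ => s' θ / sin θ - 2 * (n + 1) * cos θ * s θ / sin θ ^ 2)
      (𝓝[Ioo 0 δ] 0) (𝓝 (-n * c)) := by
  have hlim : (1 - 2 * (n + 1) / 2) * (c / cos 0) = -n * c := by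
    rw [cos_zero]; ring
  rw [← Ico_sdiff_left, ← hlim]
  exact tendsto_div_sub_mul_div_sq_of_hasDerivWithinAt (2 * (n + 1)) (convex_Ico 0 δ)
    (left_mem_Ico.mpr hδ) hs' hs'' (fun θ _ => (hasDerivAt_sin θ).hasDerivWithinAt)
    continuous_cos.continuousWithinAt h0 h1 sin_zero (by simp)

theorem sin_rpow_mul_deriv_eventuallyEq (n : ℝ)
    (hs' : ∀ θ ∈ Ico 0 δ, HasDerivWithinAt s (s' θ) (Ico 0 δ) θ) :
    (fun θ => sin θ ^ (2 * n + 1) * deriv (fun φ => s φ / sin φ ^ (2 * n + 2)) θ)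
      =ᶠ[𝓝[Ioo 0 δ] 0] fun θ => s' θ / sin θ - 2 * (n + 1) * cos θ * s θ / sin θ ^ 2 := by
  have hpi : Ioo 0 π ∈ 𝓝[Ioo 0 δ] 0 :=
    nhdsWithin_mono 0 Ioo_subset_Ioi_self (Ioo_mem_nhdsGT pi_pos)
  filter_upwards [self_mem_nhdsWithin, hpi] with θ hθ hθπ
  have hs : HasDerivAt s (s' θ) θ :=
    (hs' θ (Ioo_subset_Ico_self hθ)).hasDerivAt (Ico_mem_nhds hθ.1 hθ.2)
  rw [show 2 * n + 1 = 2 * n + 2 - 1 by ring, show 2 * (n + 1) = 2 * n + 2 by ring]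
  exact rpow_sub_one_mul_deriv_div_rpow (2 * n + 2) hs (hasDerivAt_sin θ) (sin_pos_of_mem_Ioo hθπ)

end Pole

theorem boundary_limit_at_pole_general {n δ c : ℝ} (hδ : 0 < δ) {s s' : ℝ → ℝ}
    (hs' : ∀ θ ∈ Ico 0 δ, HasDerivWithinAt s (s' θ) (Ico 0 δ) θ)
    (hs'' : HasDerivWithinAt s' c (Ico 0 δ) 0) (h0 : s 0 = 0) (h1 : s' 0 = 0) :
    Tendsto (fun θ => s' θ / sin θ - 2 * (n + 1) * cos θ * s θ / sin θ ^ 2)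
        (𝓝[Ioo 0 δ] 0) (𝓝 (-n * c)) ∧
    Tendsto (fun θ => sin θ ^ (2 * n + 1) * deriv (fun φ => s φ / sin φ ^ (2 * n + 2)) θ)
        (𝓝[Ioo 0 δ] 0) (𝓝 (-n * c)) ∧
    (∀ L : ℝ, Tendsto (fun θ => s θ / sin θ ^ 2) (𝓝[Ioo 0 δ] 0) (𝓝 L) →
      (Tendsto (fun θ => sin θ ^ (2 * n + 1) * deriv (fun φ => s φ / sin φ ^ (2 * n + 2)) θ)
          (𝓝[Ioo 0 δ] 0) (𝓝 0) ↔ n * L = 0)) := by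
  have : (𝓝[Ioo 0 δ] (0 : ℝ)).NeBot := left_nhdsWithin_Ioo_neBot hδ
  have hquot := tendsto_div_sub_mul_cos_div_sin_sq n hδ hs' hs'' h0 h1
  have hweighted := hquot.congr' (sin_rpow_mul_deriv_eventuallyEq n hs').symm
  refine ⟨hquot, hweighted, fun L hL => ?_⟩
  have hLc : L = c / 2 := tendsto_nhds_unique hL (tendsto_div_sin_sq hδ hs' hs'' h0 h1)
  calc
    _ ↔ -n * c = 0 := ⟨tendsto_nhds_unique hweighted, fun h => h ▸ hweighted⟩
    _ ↔ n * L = 0 := by simp [hLc]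

/-- Boundary limit at the pole `θ = 0` for a C² astigmatism with `s(0) = s'(0) = 0`:
`lim_{θ→0} [s'/sin θ − 2(n+1)·cos θ·s/sin²θ] = −n·s''(0)`, equivalently
`lim_{θ→0} sin^{2n+1}θ·(d/dθ)(s/sin^{2n+2}θ) = −n·s''(0)`; in particular this boundary
limit vanishes iff `n·lim_{θ→0}(s/sin²θ) = 0`. -/
theorem boundary_limit_at_pole
    (n δ : ℝ) (hn : n ∈ Set.Ioo (-1:ℝ) 1) (hδ : 0 < δ)
    (s s' s'' : ℝ → ℝ)
    (hs' : ∀ θ ∈ Set.Ico 0 δ, HasDerivWithinAt s (s' θ) (Set.Ico 0 δ) θ)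
    (hs'' : ∀ θ ∈ Set.Ico 0 δ, HasDerivWithinAt s' (s'' θ) (Set.Ico 0 δ) θ)
    (hcont : ContinuousOn s'' (Set.Ico 0 δ))
    (h0 : s 0 = 0) (h1 : s' 0 = 0) :
    Tendsto (fun θ => s' θ / Real.sin θ - 2*(n+1) * Real.cos θ * s θ / Real.sin θ^2)
        (𝓝[Set.Ioo 0 δ] 0) (𝓝 (-n * s'' 0)) ∧
    Tendsto (fun θ =>
        Real.sin θ ^ (2*n+1) * deriv (fun φ => s φ / Real.sin φ ^ (2*n+2)) θ)
        (𝓝[Set.Ioo 0 δ] 0) (𝓝 (-n * s'' 0)) ∧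
    (∀ L : ℝ, Tendsto (fun θ => s θ / Real.sin θ^2) (𝓝[Set.Ioo 0 δ] 0) (𝓝 L) →
      (Tendsto (fun θ =>
          Real.sin θ ^ (2*n+1) * deriv (fun φ => s φ / Real.sin φ ^ (2*n+2)) θ)
          (𝓝[Set.Ioo 0 δ] 0) (𝓝 0) ↔ n * L = 0)) := by
  exact boundary_limit_at_pole_general hδ hs' (hs'' 0 (left_mem_Ico.mpr hδ)) h0 h1
end
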